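/- arXiv:1912.00894 — 3 statements merged into one kernel-verified Lean document; each statement's English description precedes it below -/
import Mathlib

section
/- Let k ∈ C^{1,1}(ℝ^d × ℝ^d) be a continuous, symmetric, integrally strictly positive definite kernel, let π = Z^{−1} e^{−V} be a smooth strictly positive probability density with ∫ k(x,x) dπ(x) < ∞, and assume the integrability condition ∫ Σ_{i=1}^d [ (∂_i V(x))² k(x,x) − ∂_i V(x)( ∂_i^1 k(x,x) + ∂_i^2 k(x,x) ) + ∂_i^1 ∂_i^2 k(x,x) ] dπ(x) < ∞, where ∂_i^1 and ∂_i^2 denote the partial derivatives in the first and second kernel argument. Define (Lφ)(x) = − Σ_{i=1}^d e^{V(x)} ∂_{x_i}( e^{−V(x)} ∫ k(x,y) ∂_i φ(y) dπ(y) ). Then there is no λ > 0 such that ∫ φ Lφ dπ ≥ λ ∫ φ² dπ holds for all φ ∈ C_c^∞(ℝ^d) with ∫ φ dπ = 0; equivalently, the Stein–Poincaré inequality holds only with λ = 0. -/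
/-!
The operator is tested on bumps concentrated near the origin at scale `1/R`, with a mean-zero
profile. Let `ψ` be smooth, odd and supported in the unit ball, and put `φ(x) = ψ(R x) e^{V(x)}`.
Since `φ e^{-V} = ψ(R ·)` is odd, `φ` has mean zero under `π`, and its variance is at least a
constant times `R^{-d}`.

The energy is of order at most `R^{-2d}`. Write `w_i = (∂_i φ) π`, a function supported in the
unit ball. The scaling of `ψ`, together with `∫ ∂_i ψ = 0`, gives
`∫ ‖y‖ |w_i| + |∫ w_i| = O(R^{-d})`, although `w_i` itself is of size `R`
(`weighted_gradient_bound`). As `k` has a Lipschitz derivative, the mixed second differences of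
`K(x, y) = e^{-V(x)} k(x, y)` over `(x, x')` and `(y, 0)` are `O(‖x - x'‖ ‖y‖)`
(`mixed_difference_bound`). Hence `x ↦ ∫ K(x, y) w_i(y) dy` is Lipschitz near the unit ball with
constant `O(R^{-d})` (`integral_difference_bound`). A Lipschitz constant bounds `fderiv` even at
points of non-differentiability, where `fderiv` is `0`, so no differentiation under the integral
sign is needed: `Lφ = O(R^{-d})` uniformly on the unit ball. Integrating against
`φ π = ψ(R ·) / Z`, of mass `O(R^{-d})`, gives `∫ φ Lφ dπ = O(R^{-2d})`.

A spectral gap `λ > 0` would therefore force `λ R^{-d} ≤ C R^{-2d}` for all `R ≥ 1`, which fails as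
`R → ∞` because `d ≥ 1`.
-/

open MeasureTheory Real

/-- Partial derivative in the `i`-th coordinate direction. -/
noncomputable def pd {d : ℕ} (i : Fin d) (f : (Fin d → ℝ) → ℝ) (x : Fin d → ℝ) : ℝ :=
  fderiv ℝ f x (Pi.single i 1)

/-- A kernel is integrally strictly positive definite if `∫∫ k dμ dμ > 0` for every
finite nonzero signed Borel measure `μ` (written via its Jordan decomposition). -/
def ISPD {X : Type*} [MeasurableSpace X] (k : X → X → ℝ) : Prop :=
  ∀ s : MeasureTheory.SignedMeasure X, s ≠ 0 →
    0 < (∫ x, (∫ y, k x y ∂s.toJordanDecomposition.posPart) ∂s.toJordanDecomposition.posPart)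
      - (∫ x, (∫ y, k x y ∂s.toJordanDecomposition.negPart) ∂s.toJordanDecomposition.posPart)
      - (∫ x, (∫ y, k x y ∂s.toJordanDecomposition.posPart) ∂s.toJordanDecomposition.negPart)
      + ∫ x, (∫ y, k x y ∂s.toJordanDecomposition.negPart) ∂s.toJordanDecomposition.negPart

/-- The operator `(Lφ)(x) = −Σ_i e^{V(x)} ∂_{x_i}( e^{−V(x)} ∫ k(x,y) ∂_iφ(y) dπ(y) )`. -/
noncomputable def steinL {d : ℕ} (k : (Fin d → ℝ) → (Fin d → ℝ) → ℝ)
    (V : (Fin d → ℝ) → ℝ) (piD : (Fin d → ℝ) → ℝ)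
    (φ : (Fin d → ℝ) → ℝ) (x : Fin d → ℝ) : ℝ :=
  -∑ i, exp (V x) * pd i (fun x' => exp (-V x') * ∫ y, k x' y * pd i φ y * piD y) x

open Set Metric Filter Topology

/-! ### Second differences of the kernel -/

theorem exists_lip_closedBall {F : Type*} [NormedAddCommGroup F] [NormedSpace ℝ F]
    [FiniteDimensional ℝ F] {f : F → ℝ} (hf : ContDiff ℝ 1 f) (r : ℝ) :
    ∃ M, 0 ≤ M ∧ ∀ x ∈ closedBall (0 : F) r, ∀ y ∈ closedBall (0 : F) r,
      |f x - f y| ≤ M * ‖x - y‖ := by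
  have : ProperSpace F := FiniteDimensional.proper_real F
  obtain ⟨C, hC⟩ := (isCompact_closedBall (0 : F) r).exists_bound_of_continuousOn
    (hf.continuous_fderiv one_ne_zero).continuousOn
  refine ⟨max C 0, le_max_right _ _, fun x hx y hy => ?_⟩
  exact (convex_closedBall (0 : F) r).norm_image_sub_le_of_norm_fderiv_le (𝕜 := ℝ)
    (fun z _ => hf.differentiable one_ne_zero z) (fun z hz => (hC z hz).trans (le_max_left _ _)) hy hx

/-- Second-difference estimate for `K(x, y) = a(x) k(x, y)` near the origin. The Lipschitz
derivative of `k` plays the part of a bounded mixed derivative `∂_x ∂_y k`. -/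
theorem mixed_difference_bound {F : Type*} [NormedAddCommGroup F] [NormedSpace ℝ F]
    [FiniteDimensional ℝ F] {k : F → F → ℝ}
    (hk1 : ContDiff ℝ 1 fun p : F × F => k p.1 p.2)
    (hk11 : ∃ C : NNReal, LipschitzWith C (fderiv ℝ fun p : F × F => k p.1 p.2))
    {a : F → ℝ} (ha : ContDiff ℝ 1 a) :
    ∃ M, 0 ≤ M ∧ ∀ x ∈ closedBall (0 : F) 2, ∀ x' ∈ closedBall (0 : F) 2,
      |a x * k x 0 - a x' * k x' 0| ≤ M * ‖x - x'‖ ∧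
      ∀ y ∈ closedBall (0 : F) 2,
        |(a x * k x y - a x' * k x' y) - (a x * k x 0 - a x' * k x' 0)|
          ≤ M * ‖x - x'‖ * ‖y‖ := by
  have : ProperSpace F := FiniteDimensional.proper_real F
  obtain ⟨C, hC⟩ := hk11
  obtain ⟨A, hA⟩ := (isCompact_closedBall (0 : F) 2).exists_bound_of_continuousOn
    ha.continuous.continuousOn
  obtain ⟨La, hLa0, hLa⟩ := exists_lip_closedBall ha 2
  obtain ⟨Lk, hLk0, hLk⟩ := exists_lip_closedBall hk1 2
  have h0 : ContDiff ℝ 1 fun x : F => a x * k x 0 :=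
    ha.mul (hk1.comp (contDiff_id.prodMk contDiff_const))
  obtain ⟨L0, hL00, hL0⟩ := exists_lip_closedBall h0 2
  have hA0 : 0 ≤ A := (norm_nonneg _).trans (hA 0 (by simp))
  have hM : 0 ≤ A * C + La * Lk := by positivity
  refine ⟨max L0 (A * C + La * Lk), hL00.trans (le_max_left _ _), fun x hx x' hx' => ⟨?_, ?_⟩⟩
  · exact (hL0 x hx x' hx').trans (by gcongr; exact le_max_left _ _)
  intro y hy
  -- The `x`-derivative of `x ↦ k x y - k x 0` is `O(‖y‖)`, so the mean value inequality applies.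
  have hd : ∀ z u : F, HasFDerivAt (fun z : F => k z u)
      ((fderiv ℝ (fun p : F × F => k p.1 p.2) (z, u)).comp (ContinuousLinearMap.inl ℝ F F)) z := by
    intro z u
    have h1 := ((hk1.differentiable one_ne_zero) (z, u)).hasFDerivAt
    exact HasFDerivAt.comp (f := fun e : F => (e, u)) z h1 (hasFDerivAt_prodMk_left z u)
  have hf : |(k x y - k x 0) - (k x' y - k x' 0)| ≤ (C * ‖y‖) * ‖x - x'‖ := by
    refine convex_univ.norm_image_sub_le_of_norm_hasFDerivWithin_le (𝕜 := ℝ)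
      (f := fun z => k z y - k z 0)
      (fun z _ => ((hd z y).sub (hd z 0)).hasFDerivWithinAt) (fun z _ => ?_)
      (mem_univ _) (mem_univ _)
    rw [← ContinuousLinearMap.sub_comp]
    refine (ContinuousLinearMap.opNorm_comp_le _ _).trans ?_
    have h1 := hC.norm_sub_le (z, y) (z, 0)
    have h2 : ‖((z, y) : F × F) - (z, 0)‖ = ‖y‖ := by simp [Prod.norm_def]
    rw [h2] at h1
    calc _ ≤ (C * ‖y‖) * 1 := by
          gcongr
          exact ContinuousLinearMap.norm_inl_le_one ℝ F F
      _ = _ := mul_one _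
  have hfy : |k x' y - k x' 0| ≤ Lk * ‖y‖ := by
    have hm : ∀ u ∈ closedBall (0 : F) 2, ((x', u) : F × F) ∈ closedBall (0 : F × F) 2 := by
      intro u hu
      simp only [mem_closedBall_zero_iff] at *
      simp [Prod.norm_def, hx', hu]
    have h1 := hLk (x', y) (hm y hy) (x', 0) (hm 0 (by simp))
    have h2 : ‖((x', y) : F × F) - (x', 0)‖ = ‖y‖ := by simp [Prod.norm_def]
    rwa [h2] at h1
  have hAx : |a x| ≤ A := hA x hx
  have hax := hLa x hx x' hx'
  calc |(a x * k x y - a x' * k x' y) - (a x * k x 0 - a x' * k x' 0)|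
      = |a x * ((k x y - k x 0) - (k x' y - k x' 0)) + (a x - a x') * (k x' y - k x' 0)| := by
        congr 1; ring
    _ ≤ |a x| * |(k x y - k x 0) - (k x' y - k x' 0)| + |a x - a x'| * |k x' y - k x' 0| := by
        rw [← abs_mul, ← abs_mul]; exact abs_add_le _ _
    _ ≤ A * ((C * ‖y‖) * ‖x - x'‖) + (La * ‖x - x'‖) * (Lk * ‖y‖) := by gcongr
    _ = (A * C + La * Lk) * ‖x - x'‖ * ‖y‖ := by ring
    _ ≤ _ := by gcongr; exact le_max_right _ _

/-- Splitting `K x y - K x' y` into its value at `y = 0` and the second difference, the first part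
sees only the total mass of `w` and the second only its first absolute moment. -/
theorem integral_difference_bound {d : ℕ}
    {K : (Fin d → ℝ) → (Fin d → ℝ) → ℝ} (hK : ∀ x, Continuous (K x)) {x x' : Fin d → ℝ} {M : ℝ}
    (h0 : |K x 0 - K x' 0| ≤ M)
    (h : ∀ y ∈ closedBall (0 : Fin d → ℝ) 2, |(K x y - K x' y) - (K x 0 - K x' 0)| ≤ M * ‖y‖)
    {w : (Fin d → ℝ) → ℝ} (hw : Continuous w) (hwc : HasCompactSupport w)
    (hws : ∀ y, w y ≠ 0 → ‖y‖ ≤ 1) :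
    |(∫ y, K x y * w y) - ∫ y, K x' y * w y| ≤ M * ((∫ y, ‖y‖ * |w y|) + |∫ y, w y|) := by
  have hi : ∀ f : (Fin d → ℝ) → ℝ, Continuous f → Integrable fun y => f y * w y := fun f hf =>
    (hf.mul hw).integrable_of_hasCompactSupport hwc.mul_left
  have hin : Integrable fun y => ‖y‖ * |w y| :=
    (continuous_norm.mul hw.abs).integrable_of_hasCompactSupport
      (hwc.comp_left (g := fun t => |t|) (by simp)).mul_left
  have e1 : (∫ y, K x y * w y) - ∫ y, K x' y * w y
      = (∫ y, ((K x y - K x' y) - (K x 0 - K x' 0)) * w y)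
        + (K x 0 - K x' 0) * ∫ y, w y := by
    rw [← integral_const_mul, ← integral_sub (hi _ (hK x)) (hi _ (hK x')), ← integral_add]
    · congr 1; ext y; ring
    · exact hi _ (((hK x).sub (hK x')).sub continuous_const)
    · exact hi _ continuous_const
  have e2 : |∫ y, ((K x y - K x' y) - (K x 0 - K x' 0)) * w y| ≤ ∫ y, M * (‖y‖ * |w y|) := by
    rw [← Real.norm_eq_abs]
    refine norm_integral_le_of_norm_le (hin.const_mul M) (Eventually.of_forall fun y => ?_)
    rw [Real.norm_eq_abs, abs_mul, ← mul_assoc]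
    by_cases hy : w y = 0
    · simp [hy]
    · gcongr
      exact h y (by simpa using (hws y hy).trans one_le_two)
  rw [integral_const_mul] at e2
  rw [e1, mul_add]
  refine (abs_add_le _ _).trans (add_le_add e2 ?_)
  rw [abs_mul]
  gcongr

/-! ### Rescaled test functions -/

/-- The profile is an even bump function times the first coordinate. -/
theorem exists_odd_bump {d : ℕ} (hd : 0 < d) :
    ∃ ψ : (Fin d → ℝ) → ℝ, ContDiff ℝ (⊤ : ℕ∞) ψ ∧ tsupport ψ ⊆ closedBall 0 1 ∧
      (∀ x, ψ (-x) = -ψ x) ∧ 0 < ∫ x, (ψ x) ^ 2 := by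
  let b : ContDiffBump (0 : Fin d → ℝ) := ⟨1 / 2, 1, by norm_num, by norm_num⟩
  let i : Fin d := ⟨0, hd⟩
  have hc : ContDiff ℝ (⊤ : ℕ∞) fun x : Fin d → ℝ => b x * x i :=
    b.contDiff.mul (contDiff_apply ℝ ℝ i)
  have hs : tsupport (fun x : Fin d → ℝ => b x * x i) ⊆ closedBall 0 1 :=
    (tsupport_mul_subset_left).trans b.tsupport_eq.subset
  refine ⟨fun x => b x * x i, hc, hs, fun x => by simp [b.neg], ?_⟩
  have hcs : HasCompactSupport fun x : Fin d → ℝ => b x * x i := HasCompactSupport.mul_right b.hasCompactSupport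
  refine Continuous.integral_pos_of_hasCompactSupport_nonneg_nonzero (x := fun _ => 1 / 2)
    (hc.continuous.pow 2) (hcs.comp_left (g := fun t : ℝ => t ^ 2) (by simp))
    (fun x => sq_nonneg _) ?_
  have h1 : b (fun _ => 1 / 2) = 1 := by
    refine b.one_of_mem_closedBall ?_
    rw [mem_closedBall_zero_iff, pi_norm_le_iff_of_nonneg b.rIn_pos.le]
    intro j
    simp [b]
  simp only [h1]
  norm_num

theorem pd_support {d : ℕ} {ψ : (Fin d → ℝ) → ℝ} (hs : tsupport ψ ⊆ closedBall 0 1)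
    (i : Fin d) {x : Fin d → ℝ} (hx : pd i ψ x ≠ 0) : ‖x‖ ≤ 1 := by
  have : x ∈ tsupport ψ := by
    apply support_fderiv_subset ℝ (f := ψ)
    intro h
    exact hx (by simp [pd, h])
  simpa using hs this

theorem continuous_pd {d : ℕ} {f : (Fin d → ℝ) → ℝ} (hf : ContDiff ℝ (⊤ : ℕ∞) f) (i : Fin d) :
    Continuous (pd i f) :=
  (hf.continuous_fderiv (by simp)).clm_apply continuous_const

theorem integral_pd_eq_zero {d : ℕ} {f : (Fin d → ℝ) → ℝ} (hf : ContDiff ℝ (⊤ : ℕ∞) f)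
    (hc : HasCompactSupport f) (i : Fin d) : ∫ x, pd i f x = 0 := by
  have h1 : HasCompactSupport (pd i f) :=
    (hc.fderiv ℝ).comp_left (g := fun L : (Fin d → ℝ) →L[ℝ] ℝ => L (Pi.single i 1)) (by simp)
  have := integral_mul_fderiv_eq_neg_fderiv_mul_of_integrable (μ := volume)
    (f := fun _ : Fin d → ℝ => (1 : ℝ)) (g := f) (v := Pi.single i 1) (by simp)
    (by simpa [pd] using! (continuous_pd hf i).integrable_of_hasCompactSupport h1)
    (by simpa using hf.continuous.integrable_of_hasCompactSupport hc)
    (fun x _ => differentiableAt_const _) (fun x _ => hf.differentiable (by simp) x)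
  simpa [pd] using this

theorem integral_scale {d : ℕ} (f : (Fin d → ℝ) → ℝ) {R : ℝ} (hR : 0 < R) :
    ∫ x, f (R • x) = (R ^ d)⁻¹ * ∫ x, f x := by
  rw [Measure.integral_comp_smul_of_nonneg volume f R (hR := hR.le)]
  simp

/-- For `φ(x) = ψ(R x) e^{V(x)}`, the function `(∂_i φ) π` does not involve the exponential any
more. -/
theorem pd_scaled_mul {d : ℕ} {V ψ : (Fin d → ℝ) → ℝ} (hV : ContDiff ℝ (⊤ : ℕ∞) V)
    (hψ : ContDiff ℝ (⊤ : ℕ∞) ψ) (Z R : ℝ) (i : Fin d) (y : Fin d → ℝ) :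
    pd i (fun x => ψ (R • x) * exp (V x)) y * (exp (-V y) / Z)
      = (R * pd i ψ (R • y) + ψ (R • y) * pd i V y) / Z := by
  have h1 : HasFDerivAt (fun x : Fin d → ℝ => ψ (R • x))
      ((fderiv ℝ ψ (R • y)).comp (R • ContinuousLinearMap.id ℝ (Fin d → ℝ))) y :=
    HasFDerivAt.comp (f := fun x : Fin d → ℝ => R • x) y
      ((hψ.differentiable (by simp)) (R • y)).hasFDerivAt ((hasFDerivAt_id y).const_smul R)
  have h2 := h1.fun_mul ((hV.differentiable (by simp)) y).hasFDerivAt.exp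
  unfold pd
  have he : exp (V y) * exp (-V y) = 1 := by rw [← Real.exp_add]; simp
  rw [h2.fderiv]
  simp only [add_apply, smul_apply,
    ContinuousLinearMap.comp_apply, ContinuousLinearMap.id_apply, smul_eq_mul, map_smul]
  rw [← mul_div_assoc]
  congr 1
  linear_combination (ψ (R • y) * fderiv ℝ V y (Pi.single i 1)
    + R * fderiv ℝ ψ (R • y) (Pi.single i 1)) * he

/-- The derivative `∂_i φ` gains a factor `R`; it is compensated by the weight `‖y‖` in the first
integral and by `∫ ∂_i ψ = 0` in the second. -/
theorem weighted_gradient_bound {d : ℕ} {V ψ : (Fin d → ℝ) → ℝ} (hV : ContDiff ℝ (⊤ : ℕ∞) V)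
    (hψ : ContDiff ℝ (⊤ : ℕ∞) ψ) (hs : tsupport ψ ⊆ closedBall 0 1)
    {Z : ℝ} (hZ : 0 < Z) (i : Fin d) :
    ∃ B, 0 ≤ B ∧ ∀ R : ℝ, 1 ≤ R →
      (∫ y, ‖y‖ * |pd i (fun x => ψ (R • x) * exp (V x)) y * (exp (-V y) / Z)|)
        + |∫ y, pd i (fun x => ψ (R • x) * exp (V x)) y * (exp (-V y) / Z)|
        ≤ B * (R ^ d)⁻¹ := by
  have hc : HasCompactSupport ψ := (isCompact_closedBall _ _).of_isClosed_subset
    (isClosed_tsupport _) hs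
  have hpc : HasCompactSupport (pd i ψ) :=
    (hc.fderiv ℝ).comp_left (g := fun L : (Fin d → ℝ) →L[ℝ] ℝ => L (Pi.single i 1)) (by simp)
  obtain ⟨S, hS⟩ := (isCompact_closedBall (0 : Fin d → ℝ) 1).exists_bound_of_continuousOn
    (continuous_pd hV i).continuousOn
  have hS0 : 0 ≤ S := (norm_nonneg _).trans (hS 0 (by simp))
  have hI0 : 0 ≤ ∫ x, |ψ x| := integral_nonneg fun _ => abs_nonneg _
  have hI1 : 0 ≤ ∫ x, ‖x‖ * |pd i ψ x| := integral_nonneg fun _ => by positivity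
  refine ⟨((∫ x, ‖x‖ * |pd i ψ x|) + 2 * S * ∫ x, |ψ x|) / Z, by positivity, fun R hR => ?_⟩
  have hR0 : 0 < R := one_pos.trans_le hR
  simp_rw [pd_scaled_mul hV hψ]
  have hsc : ∀ f : (Fin d → ℝ) → ℝ, Continuous f → HasCompactSupport f →
      Integrable fun x => f (R • x) := fun f hf hfc =>
    (hf.integrable_of_hasCompactSupport hfc).comp_smul hR0.ne'
  have hia : Integrable fun x => |ψ (R • x)| := (hsc _ hψ.continuous hc).abs
  have hip : Integrable fun x => ‖R • x‖ * |pd i ψ (R • x)| :=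
    hsc (fun x => ‖x‖ * |pd i ψ x|) (continuous_norm.mul (continuous_pd hψ i).abs)
      (hpc.comp_left (g := fun t => |t|) (by simp)).mul_left
  have hψS : ∀ y, |ψ (R • y) * pd i V y| ≤ S * |ψ (R • y)| ∧
      ‖y‖ * |ψ (R • y) * pd i V y| ≤ S * |ψ (R • y)| := by
    intro y
    by_cases h : ψ (R • y) = 0
    · simp [h]
    have hy : ‖R • y‖ ≤ 1 := by simpa using hs (subset_tsupport _ h)
    rw [norm_smul, Real.norm_eq_abs, abs_of_pos hR0] at hy
    have hy1 : ‖y‖ ≤ 1 := by nlinarith [norm_nonneg y]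
    have hv : |pd i V y| ≤ S := hS y (by simpa using hy1)
    have h1 : |ψ (R • y) * pd i V y| ≤ S * |ψ (R • y)| := by
      rw [abs_mul, mul_comm]; gcongr
    exact ⟨h1, (mul_le_of_le_one_left (abs_nonneg _) hy1).trans h1⟩
  have b1 : (∫ y, ‖y‖ * |(R * pd i ψ (R • y) + ψ (R • y) * pd i V y) / Z|)
      ≤ ∫ y, (‖R • y‖ * |pd i ψ (R • y)| + S * |ψ (R • y)|) / Z := by
    refine integral_mono_of_nonneg (Eventually.of_forall fun y => by positivity)
      ((hip.add (hia.const_mul S)).div_const Z) (Eventually.of_forall fun y => ?_)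
    dsimp only
    rw [abs_div, abs_of_pos hZ, ← mul_div_assoc]
    gcongr
    calc _ ≤ ‖y‖ * (|R * pd i ψ (R • y)| + |ψ (R • y) * pd i V y|) := by
          gcongr; exact abs_add_le _ _
      _ = ‖R • y‖ * |pd i ψ (R • y)| + ‖y‖ * |ψ (R • y) * pd i V y| := by
          rw [norm_smul, Real.norm_eq_abs, abs_mul]; ring
      _ ≤ _ := by exact add_le_add le_rfl (hψS y).2
  have b2 : |∫ y, (R * pd i ψ (R • y) + ψ (R • y) * pd i V y) / Z|
      ≤ ∫ y, (S * |ψ (R • y)|) / Z := by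
    have hi1 : Integrable fun y => R * pd i ψ (R • y) :=
      (hsc _ (continuous_pd hψ i) hpc).const_mul R
    have hi2 : Integrable fun y => ψ (R • y) * pd i V y :=
      (hia.const_mul S).mono' (((hψ.continuous.comp (continuous_const_smul R)).mul
        (continuous_pd hV i)).aestronglyMeasurable) (Eventually.of_forall fun y => (hψS y).1)
    rw [integral_div, integral_add hi1 hi2, integral_const_mul, integral_scale (pd i ψ) hR0,
      integral_pd_eq_zero hψ hc i, mul_zero, mul_zero, zero_add, integral_div, abs_div,
      abs_of_pos hZ]
    gcongr
    exact norm_integral_le_of_norm_le (f := fun y => ψ (R • y) * pd i V y) (hia.const_mul S)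
      (Eventually.of_forall fun y => (hψS y).1)
  refine (add_le_add b1 b2).trans (le_of_eq ?_)
  rw [integral_div, integral_div, integral_add hip (hia.const_mul S), integral_const_mul,
    integral_scale (fun x => ‖x‖ * |pd i ψ x|) hR0, integral_scale (fun x => |ψ x|) hR0]
  ring

/-! ### Absence of a spectral gap -/

/-- no spectral gap for `C^{1,1}` kernels. For a `C^{1,1}`
integrable kernel the Stein–Poincaré inequality holds only with `λ = 0`. -/
theorem stmt_8 {d : ℕ} (hd : 0 < d)
    (k : (Fin d → ℝ) → (Fin d → ℝ) → ℝ)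
    (V : (Fin d → ℝ) → ℝ)
    -- `k ∈ C^{1,1}`: continuously differentiable with Lipschitz derivative
    (hk1 : ContDiff ℝ 1 fun p : (Fin d → ℝ) × (Fin d → ℝ) => k p.1 p.2)
    (hk11 : ∃ C : NNReal,
      LipschitzWith C (fderiv ℝ fun p : (Fin d → ℝ) × (Fin d → ℝ) => k p.1 p.2))
    -- `k` is continuous, symmetric and ISPD
    (hksym : ∀ x y, k x y = k y x)
    (hispd : ISPD k)
    -- the target `π = Z⁻¹ e^{−V}` is a smooth strictly positive probability density
    (hV : ContDiff ℝ (⊤ : ℕ∞) V)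
    (hVint : Integrable fun x => exp (-V x))
    (Z : ℝ) (hZ : Z = ∫ x, exp (-V x))
    (piD : (Fin d → ℝ) → ℝ) (hpiD : ∀ x, piD x = exp (-V x) / Z)
    -- `∫ k(x,x) dπ(x) < ∞`
    (hkk : Integrable fun x => k x x * piD x)
    -- the integrability condition
    (hcond : Integrable fun x =>
      (∑ i, ((pd i V x) ^ 2 * k x x
          - pd i V x * (pd i (fun x' => k x' x) x + pd i (k x) x)
          + pd i (fun u => pd i (k u) x) x)) * piD x) :
    ¬ ∃ lam : ℝ, 0 < lam ∧
        ∀ φ : (Fin d → ℝ) → ℝ, ContDiff ℝ (⊤ : ℕ∞) φ → HasCompactSupport φ →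
          (∫ x, φ x * piD x) = 0 →
          lam * ∫ x, (φ x) ^ 2 * piD x ≤ ∫ x, φ x * steinL k V piD φ x * piD x := by
  rintro ⟨lam, hlam, hgap⟩
  obtain rfl : piD = fun x => exp (-V x) / Z := funext hpiD
  have hZ0 : 0 < Z := hZ ▸ integral_exp_pos hVint
  obtain ⟨ψ, hψ, hs, hodd, hpos⟩ := exists_odd_bump hd
  have hc : HasCompactSupport ψ := (isCompact_closedBall _ _).of_isClosed_subset
    (isClosed_tsupport _) hs
  choose B hB0 hB using weighted_gradient_bound hV hψ hs hZ0
  obtain ⟨M, hM0, hM⟩ := mixed_difference_bound hk1 hk11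
    (a := fun x => exp (-V x)) (hV.neg.exp.of_le (by exact_mod_cast le_top))
  have hexp : Continuous fun x => exp (V x) := Real.continuous_exp.comp hV.continuous
  obtain ⟨S, hS⟩ := (isCompact_closedBall (0 : Fin d → ℝ) 1).exists_bound_of_continuousOn
    hexp.continuousOn
  have hS0 : 0 ≤ S := (norm_nonneg _).trans (hS 0 (by simp))
  obtain ⟨x₀, -, hx₀⟩ := (isCompact_closedBall (0 : Fin d → ℝ) 1).exists_isMinOn
    ⟨0, by simp⟩ hexp.continuousOn
  set c := exp (V x₀) with hcdef
  have hc0 : 0 < c := exp_pos _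
  set I0 := ∫ x, |ψ x| with hI0
  set I2 := ∫ x, (ψ x) ^ 2 with hI2
  -- The variance lower bound and the energy upper bound at scale `1/R`, cleared of denominators.
  have key : ∀ R : ℝ, 1 ≤ R → lam * c * I2 * R ^ d ≤ S * M * (∑ i, B i) * I0 := by
    intro R hR
    have hR0 : 0 < R := one_pos.trans_le hR
    have hRd : 0 < R ^ d := pow_pos hR0 d
    set φ : (Fin d → ℝ) → ℝ := fun x => ψ (R • x) * exp (V x) with hφdef
    have hgc : ContDiff ℝ (⊤ : ℕ∞) fun x : Fin d → ℝ => ψ (R • x) :=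
      hψ.comp (contDiff_const_smul R)
    have hgcs : HasCompactSupport fun x : Fin d → ℝ => ψ (R • x) :=
      hc.comp_smul hR0.ne'
    have hφ : ContDiff ℝ (⊤ : ℕ∞) φ := hgc.mul hV.exp
    have hφc : HasCompactSupport φ := hgcs.mul_right
    have hnorm : ∀ y : Fin d → ℝ, ‖R • y‖ ≤ 1 → ‖y‖ ≤ 1 := by
      intro y hy
      rw [norm_smul, Real.norm_eq_abs, abs_of_pos hR0] at hy
      nlinarith [norm_nonneg y]
    have hψ1 : ∀ y : Fin d → ℝ, ψ (R • y) ≠ 0 → ‖y‖ ≤ 1 := fun y h =>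
      hnorm y (by simpa using hs (subset_tsupport _ h))
    have he : ∀ x, exp (V x) * exp (-V x) = 1 := fun x => by rw [← Real.exp_add]; simp
    have hmean : (∫ x, φ x * (exp (-V x) / Z)) = 0 := by
      have h1 : ∀ x, φ x * (exp (-V x) / Z) = ψ (R • x) / Z := fun x => by
        simp only [hφdef]
        rw [← mul_div_assoc, mul_assoc, he, mul_one]
      have h2 : ∫ x, ψ x = 0 := by
        have := integral_neg_eq_self ψ volume
        simp_rw [hodd, integral_neg] at this
        linarith
      simp_rw [h1]
      rw [integral_div, integral_scale ψ hR0, h2]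
      simp
    have hmain := hgap φ hφ hφc hmean
    have hlow : c * I2 * (R ^ d)⁻¹ / Z ≤ ∫ x, (φ x) ^ 2 * (exp (-V x) / Z) := by
      have h1 : ∀ x, (φ x) ^ 2 * (exp (-V x) / Z) = (ψ (R • x) ^ 2 * exp (V x)) / Z := fun x => by
        simp only [hφdef]
        rw [← mul_div_assoc]
        congr 1
        linear_combination (ψ (R • x) ^ 2 * exp (V x)) * he x
      have h2 : c * I2 * (R ^ d)⁻¹ / Z = ∫ x, (c * ψ (R • x) ^ 2) / Z := by
        rw [integral_div, integral_const_mul, integral_scale (fun x => ψ x ^ 2) hR0]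
        ring
      have hsq : HasCompactSupport fun x : Fin d → ℝ => ψ (R • x) ^ 2 :=
        hgcs.comp_left (g := fun t => t ^ 2) (by simp)
      simp_rw [h1]
      rw [h2]
      refine integral_mono
        (((hgc.continuous.pow 2).integrable_of_hasCompactSupport hsq).const_mul c |>.div_const Z)
        ((((hgc.continuous.pow 2).mul hexp).integrable_of_hasCompactSupport
          hsq.mul_right).div_const Z) fun x => ?_
      dsimp only
      by_cases h : ψ (R • x) = 0
      · simp [h]
      rw [mul_comm c]
      gcongr
      exact hx₀ (by simpa using hψ1 x h)
    have hL : ∀ x, ‖x‖ ≤ 1 → |steinL k V (fun x => exp (-V x) / Z) φ x|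
        ≤ S * M * (∑ i, B i) * (R ^ d)⁻¹ := by
      intro x hx
      have hx2 : x ∈ ball (0 : Fin d → ℝ) 2 := by
        simpa using hx.trans_lt one_lt_two
      have hpd : ∀ i, |pd i (fun x' => exp (-V x') *
          ∫ y, k x' y * pd i φ y * (exp (-V y) / Z)) x| ≤ M * (B i * (R ^ d)⁻¹) := by
        intro i
        have hw : Continuous fun y => pd i φ y * (exp (-V y) / Z) :=
          (continuous_pd hφ i).mul ((Real.continuous_exp.comp hV.continuous.neg).div_const Z)
        have hwc : HasCompactSupport fun y => pd i φ y * (exp (-V y) / Z) :=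
          HasCompactSupport.mul_right ((hφc.fderiv ℝ).comp_left
            (g := fun L : (Fin d → ℝ) →L[ℝ] ℝ => L (Pi.single i 1)) (by simp))
        have hws : ∀ y, pd i φ y * (exp (-V y) / Z) ≠ 0 → ‖y‖ ≤ 1 := by
          intro y hy
          simp only [hφdef, pd_scaled_mul hV hψ] at hy
          by_contra hlt
          have h1 : ψ (R • y) = 0 := by_contra fun h => hlt (hψ1 y h)
          have h2 : pd i ψ (R • y) = 0 := by_contra fun h => hlt (hnorm y (pd_support hs i h))
          simp [h1, h2] at hy
        have hlip : ‖fderiv ℝ (fun x' => exp (-V x') *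
            ∫ y, k x' y * pd i φ y * (exp (-V y) / Z)) x‖ ≤ M * (B i * (R ^ d)⁻¹) := by
          -- Valid whether or not the integral is differentiable at `x`.
          refine norm_fderiv_le_of_lip' ℝ
            (mul_nonneg hM0 (mul_nonneg (hB0 i) (inv_nonneg.2 hRd.le))) ?_
          filter_upwards [isOpen_ball.mem_nhds hx2] with z hz
          obtain ⟨m1, m2⟩ := hM z (ball_subset_closedBall hz) x (ball_subset_closedBall hx2)
          have h3 := integral_difference_bound (K := fun x y => exp (-V x) * k x y)
            (fun u => continuous_const.mul (hk1.continuous.comp (Continuous.prodMk_right u)))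
            m1 m2 hw hwc hws
          have h4 : ∀ u, exp (-V u) * (∫ y, k u y * pd i φ y * (exp (-V y) / Z))
              = ∫ y, exp (-V u) * k u y * (pd i φ y * (exp (-V y) / Z)) := by
            intro u
            rw [← integral_const_mul]
            congr 1; ext y; ring
          rw [h4, h4, Real.norm_eq_abs]
          refine h3.trans ?_
          calc _ ≤ (M * ‖z - x‖) * (B i * (R ^ d)⁻¹) := by
                gcongr; exact hB i R hR
            _ = _ := by ring
        have hsingle : ‖(Pi.single i 1 : Fin d → ℝ)‖ = 1 := by
          simp [Pi.norm_single]
        rw [← Real.norm_eq_abs]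
        refine (ContinuousLinearMap.le_opNorm _ _).trans ?_
        rwa [hsingle, mul_one]
      unfold steinL
      rw [abs_neg]
      refine (Finset.abs_sum_le_sum_abs _ _).trans ?_
      calc _ ≤ ∑ i, S * (M * (B i * (R ^ d)⁻¹)) := by
            refine Finset.sum_le_sum fun i _ => ?_
            rw [abs_mul]
            exact mul_le_mul (hS x (by simpa using hx)) (hpd i) (abs_nonneg _) hS0
        _ = _ := by
            rw [← Finset.mul_sum, ← Finset.mul_sum, ← Finset.sum_mul]; ring
    set T := S * M * (∑ i, B i) with hT
    have hup : (∫ x, φ x * steinL k V (fun x => exp (-V x) / Z) φ x * (exp (-V x) / Z))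
        ≤ T * (R ^ d)⁻¹ * ((R ^ d)⁻¹ * I0) / Z := by
      have h2 : T * (R ^ d)⁻¹ * ((R ^ d)⁻¹ * I0) / Z
          = ∫ x, (T * (R ^ d)⁻¹ * |ψ (R • x)|) / Z := by
        rw [integral_div, integral_const_mul, integral_scale (fun x => |ψ x|) hR0]
      rw [h2]
      refine (Real.le_norm_self _).trans (norm_integral_le_of_norm_le
        (((hgc.continuous.integrable_of_hasCompactSupport hgcs).abs.const_mul _).div_const Z)
        (Eventually.of_forall fun x => ?_))
      have h1 : φ x * steinL k V (fun x => exp (-V x) / Z) φ x * (exp (-V x) / Z)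
          = steinL k V (fun x => exp (-V x) / Z) φ x * ψ (R • x) / Z := by
        have : φ x = ψ (R • x) * exp (V x) := rfl
        generalize steinL k V (fun x => exp (-V x) / Z) φ x = s
        rw [this, ← mul_div_assoc]
        congr 1
        linear_combination (ψ (R • x) * s) * he x
      rw [h1, Real.norm_eq_abs, abs_div, abs_of_pos hZ0, abs_mul]
      by_cases h : ψ (R • x) = 0
      · simp [h]
      gcongr
      exact hL x (hψ1 x h)
    have h5 : lam * (c * I2 * (R ^ d)⁻¹ / Z) ≤ T * (R ^ d)⁻¹ * ((R ^ d)⁻¹ * I0) / Z :=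
      (mul_le_mul_of_nonneg_left hlow hlam.le).trans (hmain.trans hup)
    have h6 := mul_le_mul_of_nonneg_right h5 (by positivity : 0 ≤ Z * (R ^ d * R ^ d))
    field_simp at h6
    linarith
  have hlim : Tendsto (fun R : ℝ => lam * c * I2 * R ^ d) atTop atTop :=
    (tendsto_pow_atTop hd.ne').const_mul_atTop (by positivity)
  obtain ⟨R, hR1, hR⟩ := ((hlim.eventually_gt_atTop _).and (eventually_ge_atTop 1)).exists
  exact absurd (key R hR) (not_le.2 hR1)
end

section
/- For every p ∈ (0,2], σ > 0 and d ≥ 1, the kernel k_{p,σ}(x,y) = exp(−|x−y|^p / σ^p) on ℝ^d × ℝ^d is integrally strictly positive definite: for every finite nonzero signed Borel measure μ on ℝ^d, ∫∫ exp(−|x−y|^p/σ^p) dμ(x) dμ(y) > 0. -/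
/-!
Write `α = p / 2 ∈ (0, 1]`, so that the kernel is `F (‖x - y‖ ^ 2)` with `F s = exp (-c s ^ α)`.
The function `F` is completely monotone, i.e. the Laplace transform of a probability measure on
`[0, ∞)` (an `α`-stable law), which makes the kernel a mixture of Gaussian kernels. The proof uses
this without constructing the stable law: `exists_seq_isLaplace` exhibits `F` as a pointwise limit
of transforms `h n` of probability measures `ν n`, namely the laws of normalised sums of
independent Pareto variables (for `α = 1` a Dirac mass suffices).

Let `μ = P - N` be the signed measure, with Fourier transform `charFun P - charFun N`.
* By Fourier inversion of the Gaussian, the energy `G t = ∫∫ exp (-t ‖x - y‖ ^ 2) dμ dμ` is, for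
  `t > 0`, a positive multiple of `∫ |μ̂ v| ^ 2 exp (-‖v‖ ^ 2 / (4 t)) dv`. As `μ̂` is continuous and
  not identically zero, `G` is positive on `(0, ∞)` and bounded below by some `m > 0` on any
  compact subinterval (`exists_pos_le_energy_gaussian`).
* The energy of `h n (‖x - y‖ ^ 2)` is `∫ G dν n`, hence at least `m` times the mass that `ν n`
  gives to a compact subinterval `[a, b]` of `(0, ∞)`. That mass is bounded below through
  `h n 1 - h n 2 = ∫ (exp (-u) - exp (-2 u)) dν n`, which tends to `F 1 - F 2 > 0`, whereas the
  integrand is small near `0` and near `∞`.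
* Dominated convergence lets `n → ∞` in the energies and keeps the positive lower bound
  (`energy_rpow_pos`).
-/

open MeasureTheory Real

section Laplace

open Filter Topology Set

/-! ### Stretched exponentials as limits of Laplace transforms -/

/-- `h` agrees on `[0, ∞)` with the Laplace transform of a probability measure carried by
`[0, ∞)`; its values at negative arguments are irrelevant. -/
def IsLaplace (h : ℝ → ℝ) : Prop :=
  ∃ ν : Measure ℝ, IsProbabilityMeasure ν ∧ (∀ᵐ u ∂ν, 0 ≤ u) ∧
    ∀ s, 0 ≤ s → h s = ∫ u, exp (-(u * s)) ∂ν

lemma integrable_exp_neg_mul {ν : Measure ℝ} [IsFiniteMeasure ν] (hν : ∀ᵐ u ∂ν, 0 ≤ u)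
    {s : ℝ} (hs : 0 ≤ s) : Integrable (fun u => exp (-(u * s))) ν := by
  refine (integrable_const (1 : ℝ)).mono' (by fun_prop) ?_
  filter_upwards [hν] with u hu
  rw [norm_of_nonneg (exp_pos _).le, exp_le_one_iff]
  have := mul_nonneg hu hs
  linarith

lemma IsLaplace.abs_le_one {h : ℝ → ℝ} (hh : IsLaplace h) {s : ℝ} (hs : 0 ≤ s) :
    |h s| ≤ 1 := by
  obtain ⟨ν, hp, hν, H⟩ := hh
  rw [H s hs, abs_of_nonneg (integral_nonneg fun u => (exp_pos _).le)]
  calc ∫ u, exp (-(u * s)) ∂ν ≤ ∫ _, (1 : ℝ) ∂ν := by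
        refine integral_mono_ae (integrable_exp_neg_mul hν hs) (integrable_const _) ?_
        filter_upwards [hν] with u hu
        have := mul_nonneg hu hs
        simpa using this
    _ = 1 := by simp

lemma isLaplace_exp_neg_mul {c : ℝ} (hc : 0 ≤ c) : IsLaplace fun s => exp (-(c * s)) := by
  refine ⟨Measure.dirac c, inferInstance, ?_, fun s _ => ?_⟩
  · exact (ae_dirac_iff measurableSet_Ici).2 hc
  · simp

/-- The transform of the law of a sum of independent variables is the product of the
transforms. -/
lemma IsLaplace.mul {g h : ℝ → ℝ} (hg : IsLaplace g) (hh : IsLaplace h) :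
    IsLaplace fun s => g s * h s := by
  obtain ⟨ν, hp, hν, H⟩ := hg
  obtain ⟨ρ, hp', hρ, K⟩ := hh
  refine ⟨(ν.prod ρ).map fun z => z.1 + z.2, Measure.isProbabilityMeasure_map (by fun_prop), ?_,
    fun s hs => ?_⟩
  · refine (ae_map_iff (by fun_prop) measurableSet_Ici).2 ?_
    filter_upwards [Measure.quasiMeasurePreserving_fst.ae hν,
      Measure.quasiMeasurePreserving_snd.ae hρ] with z h1 h2
    exact add_nonneg h1 h2
  · rw [integral_map (by fun_prop) (by fun_prop)]
    simp only
    rw [H s hs, K s hs, ← integral_prod_mul]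
    congr 1 with z
    rw [← exp_add]
    ring_nf

lemma IsLaplace.pow {h : ℝ → ℝ} (hh : IsLaplace h) (n : ℕ) : IsLaplace fun s => h s ^ n := by
  induction n with
  | zero => simpa using isLaplace_exp_neg_mul le_rfl
  | succ n ih => simpa [pow_succ] using ih.mul hh

lemma IsLaplace.comp_mul_left {h : ℝ → ℝ} (hh : IsLaplace h) {δ : ℝ} (hδ : 0 ≤ δ) :
    IsLaplace fun s => h (δ * s) := by
  obtain ⟨ν, hp, hν, H⟩ := hh
  refine ⟨ν.map fun u => δ * u, Measure.isProbabilityMeasure_map (by fun_prop), ?_,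
    fun s hs => ?_⟩
  · refine (ae_map_iff (by fun_prop) measurableSet_Ici).2 ?_
    filter_upwards [hν] with u hu
    positivity
  · rw [integral_map (by fun_prop) (by fun_prop)]
    simp only
    rw [H _ (by positivity)]
    congr 1 with z
    ring_nf

/-- Near `0` the integrand is at most `v ^ (-α)`, and near `∞` at most `v ^ (-(α + 1))`. -/
lemma integrableOn_stable {α : ℝ} (h0 : 0 < α) (h1 : α < 1) :
    IntegrableOn (fun v : ℝ => (1 - exp (-v)) * v ^ (-(α + 1))) (Ioi 0) := by
  have hm : Measurable (fun v : ℝ => (1 - exp (-v)) * v ^ (-(α + 1))) := by fun_prop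
  rw [← Ioc_union_Ioi_eq_Ioi zero_le_one]
  refine IntegrableOn.union ?_ ?_
  · have : IntegrableOn (fun v : ℝ => v ^ (-α)) (Ioc 0 1) :=
      (intervalIntegrable_iff_integrableOn_Ioc_of_le zero_le_one).1
        (intervalIntegral.intervalIntegrable_rpow' (by linarith))
    refine Integrable.mono' this hm.aestronglyMeasurable ?_
    filter_upwards [ae_restrict_mem measurableSet_Ioc] with v hv
    have hv0 : 0 < v := hv.1
    have e1 : exp (-v) ≤ 1 := exp_le_one_iff.2 (by linarith)
    have e2 : 1 - exp (-v) ≤ v := by linarith [add_one_le_exp (-v)]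
    rw [norm_of_nonneg (mul_nonneg (by linarith) (by positivity))]
    calc (1 - exp (-v)) * v ^ (-(α + 1)) ≤ v * v ^ (-(α + 1)) := by gcongr
      _ = v ^ (-α) := by
        rw [← rpow_one_add' hv0.le (by linarith)]
        ring_nf
  · refine Integrable.mono' (integrableOn_Ioi_rpow_of_lt (a := -(α + 1)) (by linarith) one_pos)
      hm.aestronglyMeasurable ?_
    filter_upwards [ae_restrict_mem measurableSet_Ioi] with v hv
    have hv0 : 0 < v := one_pos.trans hv
    have e1 : exp (-v) ≤ 1 := exp_le_one_iff.2 (by linarith)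
    rw [norm_of_nonneg (mul_nonneg (by linarith) (by positivity))]
    exact mul_le_of_le_one_left (by positivity) (by linarith [exp_pos (-v)])

lemma integral_stable_pos {α : ℝ} (h0 : 0 < α) (h1 : α < 1) :
    0 < ∫ v in Ioi (0 : ℝ), (1 - exp (-v)) * v ^ (-(α + 1)) := by
  have hpos : ∀ v ∈ Ioi (0 : ℝ), 0 < (1 - exp (-v)) * v ^ (-(α + 1)) := fun v hv => by
    have hv' : 0 < v := hv
    have e1 : exp (-v) < 1 := by simpa using hv'
    exact mul_pos (by linarith) (by positivity)
  rw [setIntegral_pos_iff_support_of_nonneg_ae _ (integrableOn_stable h0 h1)]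
  · have : Function.support (fun v : ℝ => (1 - exp (-v)) * v ^ (-(α + 1))) ∩ Ioi 0 = Ioi 0 :=
      inter_eq_self_of_subset_right fun v hv => (hpos v hv).ne'
    rw [this]
    simp
  · filter_upwards [ae_restrict_mem measurableSet_Ioi] with v hv using (hpos v hv).le

/-- The transform of the Pareto law with density `α u ^ (-(α + 1))` on `[1, ∞)` leaves `1` at the
origin like a multiple of `s ^ α`: the identity is the substitution `v = s u`. -/
lemma exists_isLaplace_one_sub {α : ℝ} (h0 : 0 < α) :
    ∃ L : ℝ → ℝ, IsLaplace L ∧ L 0 = 1 ∧ ∀ s, 0 < s →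
      1 - L s = α * s ^ α * ∫ v in Ioi s, (1 - exp (-v)) * v ^ (-(α + 1)) := by
  let ν := ProbabilityTheory.paretoMeasure 1 α
  have hp : IsProbabilityMeasure ν :=
    ProbabilityTheory.isProbabilityMeasure_paretoMeasure one_pos h0
  have key : ∀ f : ℝ → ℝ, ∫ u, f u ∂ν = ∫ u in Ioi 1, α * u ^ (-(α + 1)) * f u := by
    intro f
    change ∫ u, f u ∂(volume.withDensity fun u => ENNReal.ofReal _) = _
    rw [integral_withDensity_eq_integral_toReal_smul (by fun_prop) (by simp),
      ← integral_Ici_eq_integral_Ioi, ← integral_indicator measurableSet_Ici]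
    congr 1 with u
    rw [ENNReal.toReal_ofReal (ProbabilityTheory.paretoPDFReal_nonneg zero_le_one h0.le u)]
    by_cases hu : 1 ≤ u <;> simp [ProbabilityTheory.paretoPDFReal, hu, indicator]
  have hν : ∀ᵐ u ∂ν, 0 ≤ u := by
    change ν {u | ¬ 0 ≤ u} = 0
    have : {u : ℝ | ¬ 0 ≤ u} = Iio 0 := by ext; simp
    rw [this]
    change (volume.withDensity (ProbabilityTheory.paretoPDF 1 α)) _ = 0
    rw [withDensity_apply _ measurableSet_Iio]
    exact ProbabilityTheory.lintegral_paretoPDF_of_le zero_le_one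
  refine ⟨fun s => ∫ u, exp (-(u * s)) ∂ν, ⟨ν, hp, hν, fun _ _ => rfl⟩, by simp, fun s hs => ?_⟩
  have e1 : 1 - ∫ u, exp (-(u * s)) ∂ν = ∫ u, (1 - exp (-(u * s))) ∂ν := by
    rw [integral_sub (integrable_const _) (integrable_exp_neg_mul hν hs.le)]
    simp
  have e2 := integral_comp_mul_left_Ioi (fun v => (1 - exp (-v)) * v ^ (-(α + 1))) 1 hs
  rw [mul_one, smul_eq_mul, eq_inv_mul_iff_mul_eq₀ hs.ne'] at e2
  rw [e1, key, ← e2, ← integral_const_mul, ← integral_const_mul]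
  refine setIntegral_congr_fun measurableSet_Ioi fun u hu => ?_
  have hu0 : 0 < u := one_pos.trans hu
  rw [mul_rpow hs.le hu0.le]
  have : s ^ α * (s * s ^ (-(α + 1))) = 1 := by
    rw [← rpow_one_add' hs.le (by linarith), ← rpow_add hs]
    simp
  calc _ = α * (s ^ α * (s * s ^ (-(α + 1)))) * u ^ (-(α + 1)) * (1 - exp (-(u * s))) := by
        rw [this]; ring
    _ = _ := by ring_nf

/-- The functions `exp (-c s ^ α)` with `0 < α ≤ 1` are pointwise limits of Laplace transforms of
probability measures. For `α < 1` this is the limit theorem for normalised sums of independent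
Pareto variables, whose limit law is `α`-stable. -/
lemma exists_seq_isLaplace {α c : ℝ} (h0 : 0 < α) (h1 : α ≤ 1) (hc : 0 < c) :
    ∃ h : ℕ → ℝ → ℝ, (∀ n, IsLaplace (h n)) ∧
      ∀ s, 0 ≤ s → Tendsto (fun n => h n s) atTop (𝓝 (exp (-(c * s ^ α)))) := by
  rcases h1.eq_or_lt with rfl | h1
  · exact ⟨fun _ s => exp (-(c * s)), fun _ => isLaplace_exp_neg_mul hc.le, fun s _ => by simp⟩
  obtain ⟨L, hL, hL0, hLs⟩ := exists_isLaplace_one_sub h0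
  have hK := integral_stable_pos h0 h1
  have hI := integrableOn_stable h0 h1
  set F : ℝ → ℝ := fun v => (1 - exp (-v)) * v ^ (-(α + 1)) with hF
  set K := ∫ v in Ioi (0 : ℝ), F v
  -- `τ` matches the constant in `n * (1 - L (δ n * s)) → α * τ * K * s ^ α` with `c`.
  let τ := c / (α * K)
  have hτ : 0 < τ := by positivity
  let δ : ℕ → ℝ := fun n => (τ / n) ^ (1 / α)
  have hδ0 : ∀ n, 0 ≤ δ n := fun n => by positivity
  have hδα : ∀ n, δ n ^ α = τ / n := fun n => by
    rw [← rpow_mul (by positivity), one_div_mul_cancel h0.ne', rpow_one]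
  have hδ : Tendsto δ atTop (𝓝 0) := by
    have := (tendsto_const_div_atTop_nhds_zero_nat τ).rpow_const (p := 1 / α)
      (Or.inr (by positivity))
    rwa [zero_rpow (by positivity)] at this
  refine ⟨fun n s => L (δ n * s) ^ n, fun n => (hL.comp_mul_left (hδ0 n)).pow n, fun s hs => ?_⟩
  rcases hs.eq_or_lt with rfl | hs
  · simp [hL0, zero_rpow h0.ne']
  have hT : Tendsto (fun n => ∫ v in Ioi (δ n * s), F v) atTop (𝓝 K) := by
    have e : ∀ n, ∫ v in Ioi (δ n * s), F v
        = ∫ v in Ioi (0 : ℝ), (Ioi (δ n * s)).indicator F v := fun n => by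
      rw [setIntegral_indicator measurableSet_Ioi, inter_eq_self_of_subset_right]
      exact Ioi_subset_Ioi (mul_nonneg (hδ0 n) hs.le)
    simp_rw [e]
    refine tendsto_integral_of_dominated_convergence (fun v => ‖F v‖)
      (fun n => (hI.indicator measurableSet_Ioi).aestronglyMeasurable) hI.norm
      (fun n => ae_of_all _ fun v => norm_indicator_le_norm_self _ _) ?_
    filter_upwards [ae_restrict_mem measurableSet_Ioi] with v hv
    refine tendsto_const_nhds.congr' ?_
    have h3 : Tendsto (fun n => δ n * s) atTop (𝓝 0) := by simpa using hδ.mul_const s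
    filter_upwards [h3.eventually_lt_const hv] with n hn
    exact (indicator_of_mem (show v ∈ Ioi (δ n * s) from hn) F).symm
  have : Tendsto (fun n : ℕ => (1 + (L (δ n * s) - 1)) ^ n) atTop (𝓝 (exp (-(c * s ^ α)))) := by
    refine tendsto_one_add_pow_exp_of_tendsto ?_
    have h2 : Tendsto (fun n => -(α * τ * s ^ α * ∫ v in Ioi (δ n * s), F v)) atTop
        (𝓝 (-(α * τ * s ^ α * K))) := (hT.const_mul _).neg
    have e3 : α * τ * s ^ α * K = c * s ^ α := by
      simp only [τ]; field_simp
    rw [e3] at h2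
    refine h2.congr' ?_
    filter_upwards [eventually_gt_atTop 0] with n hn
    have hn' : (0 : ℝ) < n := by exact_mod_cast hn
    have hd : 0 < δ n := by positivity
    have := hLs (δ n * s) (by positivity)
    rw [mul_rpow hd.le hs.le, hδα] at this
    have e4 : L (δ n * s) - 1 = -(1 - L (δ n * s)) := by ring
    rw [e4, this]
    field_simp
  simpa using this

end Laplace

/-! ### Energies of signed measures -/

section Energy

open Filter Topology

open scoped RealInnerProductSpace

variable {V : Type*} [NormedAddCommGroup V] [InnerProductSpace ℝ V] [FiniteDimensional ℝ V]
  [MeasurableSpace V] [BorelSpace V]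

/-- The quadratic form `∫∫ f (x - y) dμ(x) dμ(y)` for `μ = P - N`, with the four product measures
grouped by sign so that it is a difference of two integrals over `V × V`. -/
noncomputable def energy (P N : Measure V) (f : V → ℝ) : ℝ :=
  ∫ z, f (z.1 - z.2) ∂(P.prod P + N.prod N) - ∫ z, f (z.1 - z.2) ∂(P.prod N + N.prod P)

variable {P N : Measure V} [IsFiniteMeasure P] [IsFiniteMeasure N]

lemma energy_eq_iterated {f : V → ℝ} (hf : Measurable f) {C : ℝ} (hC : ∀ w, |f w| ≤ C) :
    energy P N f = (∫ x, (∫ y, f (x - y) ∂P) ∂P) - (∫ x, (∫ y, f (x - y) ∂N) ∂P)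
      - (∫ x, (∫ y, f (x - y) ∂P) ∂N) + ∫ x, (∫ y, f (x - y) ∂N) ∂N := by
  have hint : ∀ ρ : Measure (V × V), IsFiniteMeasure ρ →
      Integrable (fun z : V × V => f (z.1 - z.2)) ρ := fun ρ _ =>
    (integrable_const C).mono' (hf.comp (by fun_prop)).aestronglyMeasurable
      (ae_of_all _ fun z => hC _)
  rw [energy, integral_add_measure (hint _ inferInstance) (hint _ inferInstance),
    integral_add_measure (hint _ inferInstance) (hint _ inferInstance),
    integral_prod _ (hint _ inferInstance), integral_prod _ (hint _ inferInstance),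
    integral_prod _ (hint _ inferInstance), integral_prod _ (hint _ inferInstance)]
  ring

/-- The energy of a mixture of functions is the mixture of the energies (Fubini). -/
lemma energy_mix {U : Type*} [MeasurableSpace U] {ν : Measure U} [SFinite ν] {κ : V → U → ℝ}
    (hκ : Measurable (Function.uncurry κ)) {g : U → ℝ} (hg : Integrable g ν)
    (hκg : ∀ᵐ u ∂ν, ∀ w, |κ w u| ≤ g u) :
    Integrable (fun u => energy P N fun w => κ w u) ν ∧
      energy P N (fun w => ∫ u, κ w u ∂ν) = ∫ u, energy P N (fun w => κ w u) ∂ν := by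
  have hint : ∀ ρ : Measure (V × V), IsFiniteMeasure ρ →
      Integrable (Function.uncurry fun (z : V × V) u => κ (z.1 - z.2) u) (ρ.prod ν) := by
    intro ρ _
    refine (hg.comp_snd ρ).mono' ?_ ?_
    · exact (hκ.comp (f := fun q : (V × V) × U => (q.1.1 - q.1.2, q.2))
        (by fun_prop)).aestronglyMeasurable
    · filter_upwards [Measure.quasiMeasurePreserving_snd.ae hκg] with q hq using hq _
  have h1 := hint (P.prod P + N.prod N) inferInstance
  have h2 := hint (P.prod N + N.prod P) inferInstance
  refine ⟨h1.integral_prod_right.sub h2.integral_prod_right, ?_⟩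
  unfold energy
  rw [integral_integral_swap h1, integral_integral_swap h2,
    integral_sub (by simpa using h1.integral_prod_right) (by simpa using h2.integral_prod_right)]

lemma integral_cos_inner (P N : Measure V) [IsFiniteMeasure P] [IsFiniteMeasure N] (ξ : V) :
    ∫ z, cos ⟪z.1 - z.2, ξ⟫ ∂(P.prod N) =
      (charFun P ξ * (starRingEnd ℂ) (charFun N ξ)).re := by
  rw [← charFun_neg, charFun_apply, charFun_apply, ← integral_prod_mul,
    ← RCLike.re_eq_complex_re, ← integral_re]
  · congr 1 with z
    rw [← Complex.exp_add, RCLike.re_eq_complex_re, ← Complex.exp_ofReal_mul_I_re]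
    congr 2
    rw [inner_sub_left, inner_neg_right]
    push_cast
    ring
  · refine (integrable_const (1 : ℝ)).mono' (by fun_prop) (ae_of_all _ fun z => ?_)
    rw [← Complex.exp_add, ← add_mul, ← Complex.ofReal_add, Complex.norm_exp_ofReal_mul_I]

/-- The energy of a character is the squared modulus of the Fourier transform of `P - N`. -/
lemma energy_cos (ξ : V) :
    energy P N (fun w => cos ⟪w, ξ⟫) = ‖charFun P ξ - charFun N ξ‖ ^ 2 := by
  have hint : ∀ ρ : Measure (V × V), IsFiniteMeasure ρ →
      Integrable (fun z : V × V => cos ⟪z.1 - z.2, ξ⟫) ρ := fun ρ _ =>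
    (integrable_const (1 : ℝ)).mono' (by fun_prop) (ae_of_all _ fun z => abs_cos_le_one _)
  rw [energy, integral_add_measure (hint _ inferInstance) (hint _ inferInstance),
    integral_add_measure (hint _ inferInstance) (hint _ inferInstance),
    integral_cos_inner, integral_cos_inner, integral_cos_inner, integral_cos_inner,
    Complex.sq_norm, Complex.normSq_apply]
  simp only [Complex.mul_re, Complex.conj_re, Complex.conj_im, Complex.sub_re, Complex.sub_im]
  ring

lemma energy_one_nonneg : 0 ≤ energy P N fun _ => (1 : ℝ) := by
  have h := energy_cos (P := P) (N := N) (0 : V)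
  simp only [inner_zero_right, cos_zero] at h
  rw [h]
  positivity

lemma integrable_gaussian {b : ℝ} (hb : 0 < b) :
    Integrable (fun v : V => exp (-b * ‖v‖ ^ 2)) := by
  have := (GaussianFourier.integrable_cexp_neg_mul_sq_norm_add (V := V)
    (b := b) (by simpa using hb) 0 0).norm
  refine this.congr (ae_of_all _ fun v => ?_)
  simp only [Complex.norm_exp]
  congr 1
  simp [← Complex.ofReal_pow]

lemma integral_cos_mul_gaussian {b : ℝ} (hb : 0 < b) (w : V) :
    ∫ v : V, cos ⟪w, v⟫ * exp (-b * ‖v‖ ^ 2) =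
      (π / b) ^ (Module.finrank ℝ V / 2 : ℝ) * exp (-(1 / (4 * b) * ‖w‖ ^ 2)) := by
  have h := GaussianFourier.integral_cexp_neg_mul_sq_norm_add (V := V)
    (b := b) (by simpa using hb) Complex.I w
  have hi := GaussianFourier.integrable_cexp_neg_mul_sq_norm_add (V := V)
    (b := b) (by simpa using hb) Complex.I w
  have hL : ∀ v : V, cos ⟪w, v⟫ * exp (-b * ‖v‖ ^ 2) =
      RCLike.re (Complex.exp (-b * ‖v‖ ^ 2 + Complex.I * ⟪w, v⟫)) := fun v => by
    have : (-b * ‖v‖ ^ 2 + Complex.I * ⟪w, v⟫ : ℂ) =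
      ((-b * ‖v‖ ^ 2 : ℝ) : ℂ) + ((⟪w, v⟫ : ℝ) : ℂ) * Complex.I := by push_cast; ring
    rw [this, Complex.exp_add, ← Complex.ofReal_exp, RCLike.re_eq_complex_re,
      Complex.re_ofReal_mul, Complex.exp_ofReal_mul_I_re]
    ring
  simp_rw [hL]
  rw [integral_re hi, h, RCLike.re_eq_complex_re]
  have e : ((π : ℂ) / b) ^ (Module.finrank ℝ V / 2 : ℂ) *
      Complex.exp (Complex.I ^ 2 * ‖w‖ ^ 2 / (4 * b)) =
      (((π / b) ^ (Module.finrank ℝ V / 2 : ℝ) * exp (-(1 / (4 * b) * ‖w‖ ^ 2)) : ℝ) : ℂ) := by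
    rw [Complex.I_sq]
    push_cast
    rw [Complex.ofReal_cpow (by positivity)]
    push_cast
    congr 2
    ring
  rw [e, Complex.ofReal_re]

/-- Gaussians are mixtures of characters with a Gaussian weight, so their energy is a weighted
`L²` norm of the Fourier transform of `P - N`. -/
lemma energy_gaussian {b : ℝ} (hb : 0 < b) :
    Integrable (fun v : V => ‖charFun P v - charFun N v‖ ^ 2 * exp (-b * ‖v‖ ^ 2)) ∧
    (π / b) ^ (Module.finrank ℝ V / 2 : ℝ) *
        energy P N (fun w => exp (-(1 / (4 * b) * ‖w‖ ^ 2))) =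
      ∫ v : V, ‖charFun P v - charFun N v‖ ^ 2 * exp (-b * ‖v‖ ^ 2) := by
  have hmul : ∀ (c : ℝ) (f : V → ℝ), energy P N (fun w => c * f w) = c * energy P N f := by
    intro c f
    simp only [energy, integral_const_mul, mul_sub]
  have h := energy_mix (P := P) (N := N) (ν := (volume : Measure V))
    (κ := fun w v => cos ⟪w, v⟫ * exp (-b * ‖v‖ ^ 2)) (by fun_prop) (integrable_gaussian hb)
    (ae_of_all _ fun v w => by
      rw [abs_mul, abs_exp]
      exact mul_le_of_le_one_left (exp_pos _).le (abs_cos_le_one _))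
  simp_rw [integral_cos_mul_gaussian hb, hmul] at h
  have e : ∀ v : V, energy P N (fun w => cos ⟪w, v⟫ * exp (-b * ‖v‖ ^ 2)) =
      ‖charFun P v - charFun N v‖ ^ 2 * exp (-b * ‖v‖ ^ 2) := fun v => by
    simp_rw [mul_comm _ (exp (-b * ‖v‖ ^ 2)), hmul, energy_cos]
  simp_rw [e] at h
  exact h

lemma energy_gaussian_nonneg {t : ℝ} (ht : 0 ≤ t) :
    0 ≤ energy P N fun w => exp (-(t * ‖w‖ ^ 2)) := by
  rcases ht.eq_or_lt with rfl | ht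
  · simpa using energy_one_nonneg
  have h := (energy_gaussian (P := P) (N := N) (b := 1 / (4 * t)) (by positivity)).2
  have e : 1 / (4 * (1 / (4 * t))) = t := by field_simp
  rw [e] at h
  refine nonneg_of_mul_nonneg_right (h ▸ integral_nonneg fun v => by positivity) (by positivity)

/-- The Gaussian energies are bounded below uniformly over a compact range of exponents: the
weight `exp (-‖v‖ ^ 2 / (4 t))` increases with `t`, and so does the normalising constant, hence
the spectral integral can be bounded at `t = a` and the constant at `t = b`. -/
lemma exists_pos_le_energy_gaussian (hPN : P ≠ N) {a b : ℝ} (ha : 0 < a) (hab : a ≤ b) :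
    ∃ m, 0 < m ∧ ∀ t, a ≤ t → t ≤ b → m ≤ energy P N fun w => exp (-(t * ‖w‖ ^ 2)) := by
  have hb : 0 < b := ha.trans_le hab
  obtain ⟨ξ, hξ⟩ : ∃ ξ, charFun P ξ ≠ charFun N ξ := by
    by_contra! H
    exact hPN (Measure.ext_of_charFun (funext H))
  have hA := (energy_gaussian (P := P) (N := N) (b := 1 / (4 * a)) (by positivity)).1
  set A := ∫ v : V, ‖charFun P v - charFun N v‖ ^ 2 * exp (-(1 / (4 * a)) * ‖v‖ ^ 2)
  have hApos : 0 < A := by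
    refine integral_pos_of_integrable_nonneg_nonzero (x := ξ) (by fun_prop) hA
      (fun v => by positivity) ?_
    have := norm_pos_iff.2 (sub_ne_zero.2 hξ)
    positivity
  refine ⟨A / (π / (1 / (4 * b))) ^ (Module.finrank ℝ V / 2 : ℝ), by positivity,
    fun t hat htb => ?_⟩
  have ht : 0 < t := ha.trans_le hat
  have h := energy_gaussian (P := P) (N := N) (b := 1 / (4 * t)) (by positivity)
  have e : 1 / (4 * (1 / (4 * t))) = t := by field_simp
  rw [e] at h
  rw [div_le_iff₀ (by positivity)]
  calc A ≤ ∫ v : V, ‖charFun P v - charFun N v‖ ^ 2 * exp (-(1 / (4 * t)) * ‖v‖ ^ 2) := by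
        refine integral_mono hA h.1 fun v => ?_
        simp only
        gcongr
    _ = _ := h.2.symm
    _ ≤ _ := by
        rw [mul_comm]
        gcongr
        exact energy_gaussian_nonneg ht.le

/-- Along the approximating transforms the energy is at least `m * (h n 1 - h n 2 - ε / 2)`, which
tends to `m * ε / 2 > 0`, so strictness survives in the limit. -/
theorem energy_rpow_pos (hPN : P ≠ N) {α c : ℝ} (h0 : 0 < α) (h1 : α ≤ 1) (hc : 0 < c) :
    0 < energy P N fun w => exp (-(c * (‖w‖ ^ 2) ^ α)) := by
  obtain ⟨h, hL, hlim⟩ := exists_seq_isLaplace h0 h1 hc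
  set ε := exp (-(c * 1 ^ α)) - exp (-(c * 2 ^ α)) with hε
  have hε0 : 0 < ε := by
    rw [hε, sub_pos, exp_lt_exp, neg_lt_neg_iff]
    gcongr
    norm_num
  obtain ⟨b, hab, hb⟩ : ∃ b, ε / 4 ≤ b ∧ exp (-b) < ε / 4 :=
    ((eventually_ge_atTop (ε / 4)).and
      (tendsto_exp_neg_atTop_nhds_zero.eventually_lt_const (by positivity))).exists
  obtain ⟨m, hm, hmt⟩ := exists_pos_le_energy_gaussian hPN (by positivity : 0 < ε / 4) hab
  -- `exp (-u) - exp (-2 * u)` is at most `min u (exp (-u))`, so the bracket below is nonpositive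
  -- for `u` outside `[ε / 4, b]` and at most `1` inside.
  have hbound : ∀ u, 0 ≤ u → m * (exp (-(u * 1)) - exp (-(u * 2)) - ε / 2) ≤
      energy P N fun w => exp (-(u * ‖w‖ ^ 2)) := by
    intro u hu
    have h3 : exp (-(u * 2)) = exp (-u) * exp (-u) := by rw [← exp_add]; ring_nf
    have h4 : exp (-u) ≤ 1 := exp_le_one_iff.2 (by linarith)
    have h5 : 1 - u ≤ exp (-u) := by linarith [add_one_le_exp (-u)]
    have h6 := exp_pos (-u)
    rw [mul_one, h3]
    by_cases hu1 : u < ε / 4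
    · refine le_trans ?_ (energy_gaussian_nonneg hu)
      exact mul_nonpos_of_nonneg_of_nonpos hm.le (by nlinarith)
    by_cases hu2 : b < u
    · refine le_trans ?_ (energy_gaussian_nonneg hu)
      have : exp (-u) ≤ exp (-b) := exp_le_exp.2 (by linarith)
      exact mul_nonpos_of_nonneg_of_nonpos hm.le (by nlinarith)
    · refine le_trans ?_ (hmt u (not_lt.1 hu1) (not_lt.1 hu2))
      exact mul_le_of_le_one_right hm.le (by nlinarith)
  have hn : ∀ n, Measurable (fun w : V => h n (‖w‖ ^ 2)) ∧
      m * (h n 1 - h n 2 - ε / 2) ≤ energy P N fun w => h n (‖w‖ ^ 2) := by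
    intro n
    obtain ⟨ν, hp, hν, H⟩ := hL n
    have hκ : Measurable (Function.uncurry fun (w : V) (u : ℝ) => exp (-(u * ‖w‖ ^ 2))) := by
      fun_prop
    have e : (fun w : V => h n (‖w‖ ^ 2)) = fun w => ∫ u, exp (-(u * ‖w‖ ^ 2)) ∂ν :=
      funext fun w => H _ (by positivity)
    rw [e]
    refine ⟨(hκ.stronglyMeasurable.integral_prod_right' (ν := ν)).measurable, ?_⟩
    have hmix := energy_mix (P := P) (N := N) (ν := ν) hκ (integrable_const (1 : ℝ)) (by
      filter_upwards [hν] with u hu w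
      rw [abs_exp, exp_le_one_iff, neg_nonpos]
      positivity)
    have i1 := integrable_exp_neg_mul hν zero_le_one
    have i2 := integrable_exp_neg_mul hν zero_le_two
    rw [hmix.2, H 1 zero_le_one, H 2 zero_le_two]
    calc _ = ∫ u, m * (exp (-(u * 1)) - exp (-(u * 2)) - ε / 2) ∂ν := by
          have i3 : Integrable (fun u => exp (-(u * 1)) - exp (-(u * 2))) ν := i1.sub i2
          rw [integral_const_mul, integral_sub i3 (integrable_const _), integral_sub i1 i2]
          simp
      _ ≤ _ := by
          refine integral_mono_ae (((i1.sub i2).sub (integrable_const _)).const_mul m)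
            hmix.1 ?_
          filter_upwards [hν] with u hu using hbound u hu
  have hDCT : ∀ ρ : Measure (V × V), IsFiniteMeasure ρ →
      Tendsto (fun n => ∫ z, h n (‖z.1 - z.2‖ ^ 2) ∂ρ) atTop
        (𝓝 (∫ z, exp (-(c * (‖z.1 - z.2‖ ^ 2) ^ α)) ∂ρ)) := by
    intro ρ _
    refine tendsto_integral_of_dominated_convergence (fun _ => 1)
      (fun n => ((hn n).1.comp (f := fun z : V × V => z.1 - z.2)
        (by fun_prop)).aestronglyMeasurable)
      (integrable_const _) (fun n => ae_of_all _ fun z => (hL n).abs_le_one (by positivity))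
      (ae_of_all _ fun z => hlim _ (by positivity))
  have hJ : Tendsto (fun n => energy P N fun w => h n (‖w‖ ^ 2)) atTop
      (𝓝 (energy P N fun w => exp (-(c * (‖w‖ ^ 2) ^ α)))) :=
    (hDCT _ inferInstance).sub (hDCT _ inferInstance)
  have hlow : Tendsto (fun n => m * (h n 1 - h n 2 - ε / 2)) atTop (𝓝 (m * (ε - ε / 2))) :=
    (((hlim 1 zero_le_one).sub (hlim 2 zero_le_two)).sub_const _).const_mul m
  have := le_of_tendsto_of_tendsto' hlow hJ fun n => (hn n).2
  refine lt_of_lt_of_le ?_ this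
  have : 0 < ε - ε / 2 := by linarith
  positivity

end Energy

/-- For every `p ∈ (0,2]`, `σ > 0`, `d ≥ 1`, the kernel
`k_{p,σ}(x,y) = exp(−|x−y|^p/σ^p)` on `ℝ^d` is integrally strictly positive
definite. -/
theorem stmt_13 (d : ℕ) (hd : 1 ≤ d) (p σ : ℝ) (hp : 0 < p) (hp2 : p ≤ 2) (hσ : 0 < σ) :
    ISPD fun x y : EuclideanSpace ℝ (Fin d) => exp (-(‖x - y‖ ^ p / σ ^ p)) := by
  intro s hs
  have hPN : s.toJordanDecomposition.posPart ≠ s.toJordanDecomposition.negPart := by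
    intro h
    apply hs
    rw [← s.toSignedMeasure_toJordanDecomposition, JordanDecomposition.toSignedMeasure]
    simp [h]
  have h := energy_rpow_pos hPN (α := p / 2) (c := 1 / σ ^ p) (by positivity) (by linarith)
    (by positivity)
  have e : ∀ w : EuclideanSpace ℝ (Fin d),
      exp (-(1 / σ ^ p * (‖w‖ ^ 2) ^ (p / 2))) = exp (-(‖w‖ ^ p / σ ^ p)) := fun w => by
    rw [← rpow_natCast, ← rpow_mul (norm_nonneg w)]
    congr 2
    push_cast
    rw [mul_div_cancel₀ _ two_ne_zero]
    ring
  simp_rw [e] at h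
  rwa [energy_eq_iterated (by fun_prop) (C := 1) fun w => ?_] at h
  rw [abs_exp, exp_le_one_iff, neg_nonpos]
  positivity
end

section
/- Let d ≥ 2, N ∈ ℕ, V ∈ C¹(ℝ^d), and let h ∈ C(ℝ^d) ∩ C¹(ℝ^d∖{0}) be a Lipschitz continuous positive definite function whose gradient satisfies the one-sided Lipschitz condition (∇h(x) − ∇h(y))·(x−y) ≤ C|x−y|² for all x,y ≠ 0. Let χ ∈ C_c^∞(ℝ) be nonnegative with χ ≡ 1 on [0,1]. On the set D of configurations x̄ = (x_1,…,x_N) ∈ (ℝ^d)^N with pairwise distinct coordinates, define F(x̄) = −(1/2) Σ_{l≠m} χ(|x_l−x_m|²) log |x_l−x_m|², the block mass matrix K(x̄) with d×d blocks K_{ij}(x̄) = (1/N) h(x_i−x_j) I_d, the extended potential V̄(x̄) = Σ_i V(x_i), and the generator L̄F = −∇V̄ · K∇F + (∇·K)·∇F + K : ∇∇F. Then there exist constants C₁, C₂ ∈ ℝ such that (L̄F)(x̄) ≤ C₁ Σ_{i=1}^N |∇V(x_i)| + C₂ for all x̄ ∈ D. -/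
/-!
Write `g(s) = χ(s) log s`, `f(z) = g(|z|²)` and `u = ∇f`, so that `∇_j F = -Σ_m u(x_j - x_m)`.
Near a collision `u(z) ~ 2 z / |z|²` is singular, and the estimate rests on exchanging particle
indices in each of the three terms of the generator (`svgdGen_lyapF`) before bounding anything.

* Since `u` is odd, the drift term contains only differences `h(x_i - x_j) - h(x_i - x_m)`
  multiplied by `u(x_j - x_m)`; as `h` is Lipschitz and `|z| |u(z)|` is bounded, this is controlled
  by `Σ_i |∇V(x_i)|` (`drift_bound`).
* In the divergence term the exchange produces `(∇h(x) - ∇h(y)) · u(x - y)`, which near the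
  diagonal is a positive multiple `2 / |x - y|²` of the quantity in the one-sided Lipschitz
  condition, and elsewhere is bounded because `∇h` is (`osl_pairGrad`, `divergence_bound`).
* The diffusion term becomes `-Δf(z)` times the average of `h(0) - h(z)` and `h(0) - h(-z)`. This
  average is nonnegative by positive definiteness, and `Δf(z) = (2d - 4) / |z|² ≥ 0` for `|z| < 1`
  because `d ≥ 2`; for `|z| ≥ 1` everything is bounded (`pairLap_weight`, `diffusion_bound`).

All bounds on `f` reduce to the boundedness of `s g'(s)` and
`s² g''(s)` on `(0, ∞)` (`prof_bounds`). The conventions `log 0 = 0` and `x / 0 = 0` make `u` and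
`Δf`, as encoded below, vanish at `z = 0`, so that sums over `m ≠ j` may be extended to all `m`.
-/

open MeasureTheory Real

/-- Partial derivative of a function on configuration space
`(ℝ^d)^N` in the direction of the `a`-th coordinate of the `i`-th particle. -/
noncomputable def pdc {d N : ℕ} (i : Fin N) (a : Fin d)
    (F : (Fin N → EuclideanSpace ℝ (Fin d)) → ℝ)
    (xb : Fin N → EuclideanSpace ℝ (Fin d)) : ℝ :=
  fderiv ℝ F xb (Pi.single i (EuclideanSpace.single a 1))

/-- The generator `L̄F = −∇V̄·K∇F + (∇·K)·∇F + K:∇∇F` of the stochastic SVGD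
dynamics, for the block mass matrix `K_{ij} = (1/N) h(x_i−x_j) I_d` and the
extended potential `V̄(x̄) = Σ_i V(x_i)`. -/
noncomputable def svgdGen {d N : ℕ} (h : EuclideanSpace ℝ (Fin d) → ℝ)
    (V : EuclideanSpace ℝ (Fin d) → ℝ)
    (F : (Fin N → EuclideanSpace ℝ (Fin d)) → ℝ)
    (xb : Fin N → EuclideanSpace ℝ (Fin d)) : ℝ :=
  -(∑ i, ∑ j, ∑ a, (1 / (N : ℝ)) * h (xb i - xb j)
      * fderiv ℝ V (xb i) (EuclideanSpace.single a 1) * pdc j a F xb)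
  + (∑ i, ∑ a, (∑ j, pdc j a (fun xb' => (1 / (N : ℝ)) * h (xb' i - xb' j)) xb)
      * pdc i a F xb)
  + ∑ i, ∑ j, ∑ a, (1 / (N : ℝ)) * h (xb i - xb j)
      * pdc i a (fun xb' => pdc j a F xb') xb

/-- The Lyapunov function `F(x̄) = −(1/2) Σ_{l≠m} χ(|x_l−x_m|²) log |x_l−x_m|²`. -/
noncomputable def lyapF {d N : ℕ} (χ : ℝ → ℝ)
    (xb : Fin N → EuclideanSpace ℝ (Fin d)) : ℝ :=
  -(1 / 2) * ∑ l, ∑ m,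
    if l ≠ m then χ (‖xb l - xb m‖ ^ 2) * log (‖xb l - xb m‖ ^ 2) else 0

/-! ### The pair potential -/

/-- First derivative on `(0, ∞)` of the pair potential profile `s ↦ χ(s) log s`. At `s = 0` the
conventions `log 0 = 0` and `x / 0 = 0` give the value `0`. -/
noncomputable def profD1 (χ : ℝ → ℝ) (s : ℝ) : ℝ := deriv χ s * log s + χ s / s

/-- Second derivative on `(0, ∞)` of `s ↦ χ(s) log s`; its value at `s = 0` is `0`. -/
noncomputable def profD2 (χ : ℝ → ℝ) (s : ℝ) : ℝ :=
  deriv (deriv χ) s * log s + 2 * deriv χ s / s - χ s / s ^ 2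

/-- The gradient `u(z) = 2 g'(|z|²) z` of the pair potential `f(z) = g(|z|²)`,
`g(s) = χ(s) log s`; it satisfies `u(0) = 0`. -/
noncomputable def pairGrad {d : ℕ} (χ : ℝ → ℝ) (z : EuclideanSpace ℝ (Fin d)) :
    EuclideanSpace ℝ (Fin d) := (2 * profD1 χ (‖z‖ ^ 2)) • z

/-- The Laplacian of the pair potential as a function of `s = |z|²`,
namely `2 d g'(s) + 4 s g''(s)`. -/
noncomputable def pairLap (d : ℕ) (χ : ℝ → ℝ) (s : ℝ) : ℝ :=
  2 * d * profD1 χ s + 4 * profD2 χ s * s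

lemma pairGrad_neg {d : ℕ} (χ : ℝ → ℝ) (z : EuclideanSpace ℝ (Fin d)) :
    pairGrad χ (-z) = -pairGrad χ z := by
  simp [pairGrad]

lemma pairGrad_zero {d : ℕ} (χ : ℝ → ℝ) :
    pairGrad χ (0 : EuclideanSpace ℝ (Fin d)) = 0 := by
  simp [pairGrad]

lemma pairLap_zero (d : ℕ) (χ : ℝ → ℝ) : pairLap d χ 0 = 0 := by
  simp [pairLap, profD1]

lemma hasDerivAt_prof {χ : ℝ → ℝ} (hχ : ContDiff ℝ (⊤ : ℕ∞) χ) {s : ℝ} (hs : s ≠ 0) :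
    HasDerivAt (fun s => χ s * log s) (profD1 χ s) s := by
  have h1 : HasDerivAt χ (deriv χ s) s :=
    (hχ.differentiable (by simp)).differentiableAt.hasDerivAt
  have h2 := h1.mul (Real.hasDerivAt_log hs)
  rwa [← div_eq_mul_inv] at h2

lemma contDiff_deriv_cutoff {χ : ℝ → ℝ} (hχ : ContDiff ℝ (⊤ : ℕ∞) χ) :
    ContDiff ℝ (⊤ : ℕ∞) (deriv χ) :=
  (contDiff_infty_iff_deriv.1 hχ).2

lemma hasDerivAt_profD1 {χ : ℝ → ℝ} (hχ : ContDiff ℝ (⊤ : ℕ∞) χ) {s : ℝ} (hs : s ≠ 0) :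
    HasDerivAt (profD1 χ) (profD2 χ s) s := by
  have h1 : HasDerivAt χ (deriv χ s) s :=
    (hχ.differentiable (by simp)).differentiableAt.hasDerivAt
  have h2 : HasDerivAt (deriv χ) (deriv (deriv χ) s) s :=
    ((contDiff_deriv_cutoff hχ).differentiable (by simp)).differentiableAt.hasDerivAt
  have h3 := (h2.mul (Real.hasDerivAt_log hs)).add (h1.div (hasDerivAt_id s) hs)
  refine h3.congr_deriv ?_
  simp only [profD2, id]
  field_simp
  ring

/-- Below the plateau end of the cutoff the profile is exactly `log`, so `g'(s) = 1/s` and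
`g''(s) = -1/s²`. -/
lemma prof_of_lt_one {χ : ℝ → ℝ} (hχone : ∀ r ∈ Set.Icc (0 : ℝ) 1, χ r = 1) {s : ℝ}
    (h0 : 0 < s) (h1 : s < 1) : profD1 χ s = 1 / s ∧ profD2 χ s = -(1 / s ^ 2) := by
  have hev : χ =ᶠ[nhds s] fun _ => 1 := by
    filter_upwards [Ioo_mem_nhds h0 h1] with r hr using hχone r ⟨hr.1.le, hr.2.le⟩
  have hd0 : deriv χ s = 0 := by rw [hev.deriv_eq]; simp
  have hd1 : deriv (deriv χ) s = 0 := by rw [hev.deriv.deriv_eq]; simp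
  have hs := hχone s ⟨h0.le, h1.le⟩
  simp [profD1, profD2, hd0, hd1, hs]

/-- The scale-invariant quantities `s g'(s)` and `s² g''(s)` extend to continuous compactly
supported functions on the line, because `s log s` is continuous; hence they are bounded. -/
lemma prof_bounds {χ : ℝ → ℝ} (hχ : ContDiff ℝ (⊤ : ℕ∞) χ) (hχc : HasCompactSupport χ) :
    ∃ B : ℝ, 0 ≤ B ∧ ∀ s : ℝ, 0 < s → |s * profD1 χ s| ≤ B ∧ |s ^ 2 * profD2 χ s| ≤ B := by
  have c0 : Continuous χ := hχ.continuous
  have c1 : Continuous (deriv χ) := (contDiff_deriv_cutoff hχ).continuous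
  have c2 : Continuous (deriv (deriv χ)) :=
    (contDiff_deriv_cutoff (contDiff_deriv_cutoff hχ)).continuous
  have k1 : HasCompactSupport (deriv χ) := hχc.deriv
  have k2 : HasCompactSupport (deriv (deriv χ)) := k1.deriv
  have cl : Continuous fun s : ℝ => s * log s := Real.continuous_mul_log
  have bdd : ∀ ψ w : ℝ → ℝ, Continuous ψ → HasCompactSupport ψ → Continuous w →
      ∃ B : ℝ, ∀ s, |ψ s * w s| ≤ B := fun ψ w hψ hk hw =>
    (hψ.mul hw).bounded_above_of_compact_support hk.mul_right
  obtain ⟨B1, hB1⟩ := bdd (deriv χ) (fun s => s * log s) c1 k1 cl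
  obtain ⟨B2, hB2⟩ := bdd χ (fun _ => 1) c0 hχc continuous_const
  obtain ⟨B3, hB3⟩ := bdd (deriv (deriv χ)) (fun s => s * (s * log s)) c2 k2
    (continuous_id.mul cl)
  obtain ⟨B4, hB4⟩ := bdd (deriv χ) (fun s => 2 * s) c1 k1 (by fun_prop)
  have p1 := (abs_nonneg _).trans (hB1 0)
  have p2 := (abs_nonneg _).trans (hB2 0)
  have p3 := (abs_nonneg _).trans (hB3 0)
  have p4 := (abs_nonneg _).trans (hB4 0)
  refine ⟨B1 + B2 + B3 + B4, by positivity, fun s hs => ⟨?_, ?_⟩⟩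
  · have e : s * profD1 χ s = deriv χ s * (s * log s) + χ s * 1 := by
      simp only [profD1]; field_simp
    rw [e]
    have := abs_add_le (deriv χ s * (s * log s)) (χ s * 1)
    linarith [hB1 s, hB2 s]
  · have e : s ^ 2 * profD2 χ s
        = deriv (deriv χ) s * (s * (s * log s)) + deriv χ s * (2 * s) - χ s * 1 := by
      simp only [profD2]; field_simp
    rw [e]
    have e1 := abs_sub (deriv (deriv χ) s * (s * (s * log s)) + deriv χ s * (2 * s)) (χ s * 1)
    have e2 := abs_add_le (deriv (deriv χ) s * (s * (s * log s))) (deriv χ s * (2 * s))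
    linarith [hB3 s, hB4 s, hB2 s]

lemma hasFDerivAt_pair {d : ℕ} {χ : ℝ → ℝ} (hχ : ContDiff ℝ (⊤ : ℕ∞) χ)
    {z : EuclideanSpace ℝ (Fin d)} (hz : z ≠ 0) :
    HasFDerivAt (fun z : EuclideanSpace ℝ (Fin d) => χ (‖z‖ ^ 2) * log (‖z‖ ^ 2))
      (innerSL ℝ (pairGrad χ z)) z := by
  have h1 := (hasDerivAt_prof hχ (s := ‖z‖ ^ 2) (by simpa using hz)).comp_hasFDerivAt z
    (hasStrictFDerivAt_norm_sq z).hasFDerivAt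
  refine h1.congr_fderiv ?_
  ext w
  simp [pairGrad]
  ring

/-- Each diagonal entry of the Hessian of the pair potential. -/
lemma hasFDerivAt_pairGrad_coord {d : ℕ} {χ : ℝ → ℝ} (hχ : ContDiff ℝ (⊤ : ℕ∞) χ)
    {z : EuclideanSpace ℝ (Fin d)} (hz : z ≠ 0) (a : Fin d) :
    ∃ L : EuclideanSpace ℝ (Fin d) →L[ℝ] ℝ,
      HasFDerivAt (fun z : EuclideanSpace ℝ (Fin d) => pairGrad χ z a) L z ∧
      L (EuclideanSpace.single a 1)
        = 2 * profD1 χ (‖z‖ ^ 2) + 4 * profD2 χ (‖z‖ ^ 2) * z a ^ 2 := by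
  have h1 := (hasDerivAt_profD1 hχ (s := ‖z‖ ^ 2) (by simpa using hz)).comp_hasFDerivAt z
    (hasStrictFDerivAt_norm_sq z).hasFDerivAt
  have h2 : HasFDerivAt (fun z : EuclideanSpace ℝ (Fin d) => z a)
      (EuclideanSpace.proj a : EuclideanSpace ℝ (Fin d) →L[ℝ] ℝ) z :=
    (EuclideanSpace.proj a : EuclideanSpace ℝ (Fin d) →L[ℝ] ℝ).hasFDerivAt
  have h3 := (h1.const_mul 2).mul h2
  refine ⟨_, h3, ?_⟩
  simp [EuclideanSpace.inner_single_right]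
  ring

/-! ### Derivatives on configuration space -/

/-- The chain rule for a function of one difference `x_l - x_m`: the Kronecker symbols record
which of the two particles is moved. -/
lemma hasFDerivAt_diff {d N : ℕ} {φ : EuclideanSpace ℝ (Fin d) → ℝ}
    {φ' : EuclideanSpace ℝ (Fin d) →L[ℝ] ℝ} {l m : Fin N}
    {xb : Fin N → EuclideanSpace ℝ (Fin d)} (hφ : HasFDerivAt φ φ' (xb l - xb m)) :
    ∃ L : (Fin N → EuclideanSpace ℝ (Fin d)) →L[ℝ] ℝ,
      HasFDerivAt (fun x : Fin N → EuclideanSpace ℝ (Fin d) => φ (x l - x m)) L xb ∧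
      ∀ i e, L (Pi.single i e)
        = ((if l = i then 1 else 0) - (if m = i then 1 else 0)) * φ' e := by
  have hl : HasFDerivAt (fun x : Fin N → EuclideanSpace ℝ (Fin d) => x l - x m)
      ((ContinuousLinearMap.proj l : (Fin N → EuclideanSpace ℝ (Fin d)) →L[ℝ] _)
        - ContinuousLinearMap.proj m) xb :=
    ((ContinuousLinearMap.proj l : (Fin N → EuclideanSpace ℝ (Fin d)) →L[ℝ] _)
        - ContinuousLinearMap.proj m).hasFDerivAt
  refine ⟨_, hφ.comp xb hl, fun i e => ?_⟩
  by_cases h1 : l = i <;> by_cases h2 : m = i <;> simp [h1, h2]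

/-- The partial gradient of the Lyapunov function is `∇_j F = -Σ_m u(x_j - x_m)`. -/
lemma pdc_lyapF {d N : ℕ} {χ : ℝ → ℝ} (hχ : ContDiff ℝ (⊤ : ℕ∞) χ)
    {xb : Fin N → EuclideanSpace ℝ (Fin d)} (hx : ∀ l m : Fin N, l ≠ m → xb l ≠ xb m)
    (j : Fin N) (a : Fin d) :
    pdc j a (lyapF χ) xb = -∑ m, pairGrad χ (xb j - xb m) a := by
  have key : ∀ l m : Fin N, ∃ L : (Fin N → EuclideanSpace ℝ (Fin d)) →L[ℝ] ℝ,
      HasFDerivAt (fun x : Fin N → EuclideanSpace ℝ (Fin d) =>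
        if l ≠ m then χ (‖x l - x m‖ ^ 2) * log (‖x l - x m‖ ^ 2) else 0) L xb ∧
      L (Pi.single j (EuclideanSpace.single a 1))
        = ((if l = j then 1 else 0) - (if m = j then 1 else 0))
          * pairGrad χ (xb l - xb m) a := by
    intro l m
    by_cases hlm : l = m
    · subst hlm
      refine ⟨0, ?_, by simp⟩
      simpa using hasFDerivAt_const (0 : ℝ) xb
    · obtain ⟨L, h1, h2⟩ := hasFDerivAt_diff (l := l) (m := m) (xb := xb)
        (hasFDerivAt_pair hχ (sub_ne_zero.2 (hx l m hlm)))
      refine ⟨L, by simpa [hlm] using h1, ?_⟩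
      rw [h2]
      simp [EuclideanSpace.inner_single_right]
  choose L hL1 hL2 using key
  have hF : HasFDerivAt (lyapF χ) ((-(1 / 2) : ℝ) • ∑ l, ∑ m, L l m) xb := by
    have := (HasFDerivAt.fun_sum (u := Finset.univ) fun l _ =>
      HasFDerivAt.fun_sum (u := Finset.univ) fun m _ => hL1 l m).const_mul (-(1 / 2) : ℝ)
    exact this
  have e : ∀ l, pairGrad χ (xb l - xb j) a = -pairGrad χ (xb j - xb l) a := fun l => by
    rw [← neg_sub, pairGrad_neg]; rfl
  rw [pdc, hF.fderiv]
  simp only [_root_.smul_apply, _root_.sum_apply, hL2, sub_mul,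
    Finset.sum_sub_distrib, ite_mul, one_mul, zero_mul, smul_eq_mul]
  rw [Finset.sum_comm]
  simp only [Finset.sum_ite_eq', Finset.mem_univ, if_true, e, Finset.sum_neg_distrib]
  ring

lemma eventually_distinct {d N : ℕ} {xb : Fin N → EuclideanSpace ℝ (Fin d)}
    (hx : ∀ l m : Fin N, l ≠ m → xb l ≠ xb m) :
    ∀ᶠ x in nhds xb, ∀ l m : Fin N, l ≠ m → x l ≠ x m := by
  rw [Filter.eventually_all]; intro l
  rw [Filter.eventually_all]; intro m
  by_cases hlm : l = m
  · simp [hlm]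
  · have hc : Continuous fun x : Fin N → EuclideanSpace ℝ (Fin d) => x l - x m := by fun_prop
    filter_upwards [hc.continuousAt.eventually_ne (sub_ne_zero.2 (hx l m hlm))] with x hx' _
      using sub_ne_zero.1 hx'

/-- The second-order partial derivatives of the Lyapunov function, traced over the spatial
index. The terms `m = j` contribute nothing since `pairLap d χ 0 = 0`. -/
lemma sum_pdc_pdc_lyapF {d N : ℕ} {χ : ℝ → ℝ} (hχ : ContDiff ℝ (⊤ : ℕ∞) χ)
    {xb : Fin N → EuclideanSpace ℝ (Fin d)} (hx : ∀ l m : Fin N, l ≠ m → xb l ≠ xb m)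
    (i j : Fin N) :
    ∑ a, pdc i a (fun x => pdc j a (lyapF χ) x) xb
      = -∑ m, ((if j = i then 1 else 0) - (if m = i then 1 else 0))
          * pairLap d χ (‖xb j - xb m‖ ^ 2) := by
  have key : ∀ (a : Fin d) (m : Fin N), ∃ L : (Fin N → EuclideanSpace ℝ (Fin d)) →L[ℝ] ℝ,
      HasFDerivAt (fun x : Fin N → EuclideanSpace ℝ (Fin d) =>
        pairGrad χ (x j - x m) a) L xb ∧
      L (Pi.single i (EuclideanSpace.single a 1))
        = ((if j = i then 1 else 0) - (if m = i then 1 else 0))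
          * (2 * profD1 χ (‖xb j - xb m‖ ^ 2)
            + 4 * profD2 χ (‖xb j - xb m‖ ^ 2) * (xb j - xb m) a ^ 2) := by
    intro a m
    by_cases hjm : j = m
    · subst hjm
      refine ⟨0, ?_, by simp⟩
      simpa [pairGrad_zero] using hasFDerivAt_const (0 : ℝ) xb
    · obtain ⟨L', h1', h2'⟩ := hasFDerivAt_pairGrad_coord hχ (sub_ne_zero.2 (hx j m hjm)) a
      obtain ⟨L, h1, h2⟩ := hasFDerivAt_diff (l := j) (m := m) (xb := xb) h1'
      exact ⟨L, h1, by rw [h2, h2']⟩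
  choose L hL1 hL2 using key
  have hp : ∀ a, pdc i a (fun x => pdc j a (lyapF χ) x) xb
      = -∑ m, ((if j = i then 1 else 0) - (if m = i then 1 else 0))
          * (2 * profD1 χ (‖xb j - xb m‖ ^ 2)
            + 4 * profD2 χ (‖xb j - xb m‖ ^ 2) * (xb j - xb m) a ^ 2) := by
    intro a
    have hev : (fun x => pdc j a (lyapF χ) x)
        =ᶠ[nhds xb] fun x => -∑ m, pairGrad χ (x j - x m) a := by
      filter_upwards [eventually_distinct hx] with x hx' using pdc_lyapF hχ hx' j a
    have hd := (HasFDerivAt.fun_sum (u := Finset.univ) fun m _ => hL1 a m).fun_neg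
    rw [pdc, hev.fderiv_eq, hd.fderiv]
    simp [hL2]
  simp only [hp, Finset.sum_neg_distrib]
  rw [Finset.sum_comm]
  congr 1
  refine Finset.sum_congr rfl fun m _ => ?_
  rw [← Finset.mul_sum]
  congr 1
  simp only [Finset.sum_add_distrib, ← Finset.mul_sum, pairLap, EuclideanSpace.real_norm_sq_eq]
  simp
  ring

/-- The contribution of the block `K_{ij}` to `(∇·K)_i`; the diagonal block is constant. -/
lemma pdc_kernel {d N : ℕ} {h : EuclideanSpace ℝ (Fin d) → ℝ}
    (hd : ∀ z, z ≠ 0 → DifferentiableAt ℝ h z)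
    {xb : Fin N → EuclideanSpace ℝ (Fin d)} (hx : ∀ l m : Fin N, l ≠ m → xb l ≠ xb m)
    (i j : Fin N) (a : Fin d) :
    pdc j a (fun x => (1 / (N : ℝ)) * h (x i - x j)) xb
      = -(1 / (N : ℝ)) * (if i = j then 0 else fderiv ℝ h (xb i - xb j))
          (EuclideanSpace.single a 1) := by
  by_cases hij : i = j
  · subst hij
    simp [pdc]
  · obtain ⟨L, h1, h2⟩ := hasFDerivAt_diff (l := i) (m := j) (xb := xb)
      (hd _ (sub_ne_zero.2 (hx i j hij))).hasFDerivAt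
    rw [pdc, (h1.const_mul (1 / (N : ℝ))).fderiv]
    simp [h2, hij]

/-! ### Pairwise estimates -/

/-- A linear form is determined by its values on the coordinate basis. -/
lemma sum_apply_single {d : ℕ} (T : EuclideanSpace ℝ (Fin d) →L[ℝ] ℝ)
    (w : EuclideanSpace ℝ (Fin d)) :
    ∑ a, T (EuclideanSpace.single a 1) * w a = T w := by
  conv_rhs => rw [← (EuclideanSpace.basisFun (Fin d) ℝ).sum_repr w]
  simp [mul_comm]

lemma abs_apply_le_sqrt {d : ℕ} (T : EuclideanSpace ℝ (Fin d) →L[ℝ] ℝ)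
    (w : EuclideanSpace ℝ (Fin d)) :
    |T w| ≤ Real.sqrt (∑ a, T (EuclideanSpace.single a 1) ^ 2) * ‖w‖ := by
  rw [← sum_apply_single, EuclideanSpace.norm_eq, ← Real.sqrt_mul (by positivity)]
  apply Real.abs_le_sqrt
  simpa using Finset.sum_mul_sq_le_sq_mul_sq Finset.univ
    (fun a => T (EuclideanSpace.single a 1)) (fun a => w a)

/-- Averaging a double sum with its transpose. -/
lemma sum_symmetrize {N : ℕ} (A : Fin N → Fin N → ℝ) :
    ∑ j, ∑ m, A j m = (1 / 2) * ∑ j, ∑ m, (A j m + A m j) := by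
  have : ∑ j, ∑ m, A m j = ∑ j, ∑ m, A j m := Finset.sum_comm
  simp only [Finset.sum_add_distrib, this]
  ring

lemma norm_pairGrad_mul_le {d : ℕ} {χ : ℝ → ℝ} {B : ℝ} (hB0 : 0 ≤ B)
    (hB : ∀ s : ℝ, 0 < s → |s * profD1 χ s| ≤ B) (z : EuclideanSpace ℝ (Fin d)) :
    ‖z‖ * ‖pairGrad χ z‖ ≤ 2 * B := by
  rcases eq_or_ne z 0 with rfl | hz
  · simpa using hB0
  · have hs : 0 < ‖z‖ ^ 2 := by positivity
    have := hB _ hs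
    rw [abs_mul, abs_of_pos hs] at this
    rw [pairGrad, norm_smul, Real.norm_eq_abs, abs_mul, abs_two]
    nlinarith

/-- The one-sided Lipschitz condition cancels the singularity of the pair gradient: the gap of
`∇h` tested against `u(z)` is bounded above when `x - y` is a multiple `c z`, `1 ≤ c ≤ 2`
(used with `c = 1` and, for `x = z`, `y = -z`, with `c = 2`). -/
lemma osl_pairGrad {d : ℕ} {χ : ℝ → ℝ} {B : ℝ} (hB0 : 0 ≤ B)
    (hB : ∀ s : ℝ, 0 < s → |s * profD1 χ s| ≤ B)
    (hχone : ∀ r ∈ Set.Icc (0 : ℝ) 1, χ r = 1)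
    {h : EuclideanSpace ℝ (Fin d) → ℝ} {C : NNReal} (hlip : LipschitzWith C h) {C0 : ℝ}
    (hC0 : 0 ≤ C0) {x y z : EuclideanSpace ℝ (Fin d)} {c : ℝ} (hc1 : 1 ≤ c) (hc2 : c ≤ 2)
    (hosl : fderiv ℝ h x (x - y) - fderiv ℝ h y (x - y) ≤ C0 * ‖x - y‖ ^ 2)
    (hxy : x - y = c • z) :
    (fderiv ℝ h x - fderiv ℝ h y) (pairGrad χ z) ≤ 4 * C0 + 4 * C * B := by
  have hCB : (0 : ℝ) ≤ C * B := by positivity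
  rcases eq_or_ne z 0 with rfl | hz
  · rw [pairGrad_zero, map_zero]
    linarith
  have hz' : 0 < ‖z‖ := norm_pos_iff.2 hz
  have hs : 0 < ‖z‖ ^ 2 := by positivity
  rcases lt_or_ge (‖z‖ ^ 2) 1 with h1 | h1
  · rw [hxy] at hosl
    simp only [map_smul, smul_eq_mul, norm_smul, Real.norm_eq_abs,
      abs_of_nonneg (zero_le_one.trans hc1)] at hosl
    have h2 : (fderiv ℝ h x - fderiv ℝ h y) z ≤ C0 * c * ‖z‖ ^ 2 := by
      rw [_root_.sub_apply]
      have hcp : 0 < c := by linarith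
      refine le_of_mul_le_mul_left ?_ hcp
      nlinarith
    rw [pairGrad, (prof_of_lt_one hχone hs h1).1, map_smul, smul_eq_mul]
    have h3 : 2 * (1 / ‖z‖ ^ 2) * (fderiv ℝ h x - fderiv ℝ h y) z
        ≤ 2 * (1 / ‖z‖ ^ 2) * (C0 * c * ‖z‖ ^ 2) := by gcongr
    have h4 : 2 * (1 / ‖z‖ ^ 2) * (C0 * c * ‖z‖ ^ 2) = 2 * C0 * c := by field_simp
    nlinarith
  · have h2 : ‖fderiv ℝ h x - fderiv ℝ h y‖ ≤ 2 * C := by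
      refine (norm_sub_le _ _).trans ?_
      linarith [norm_fderiv_le_of_lipschitz ℝ hlip (x₀ := x),
        norm_fderiv_le_of_lipschitz ℝ hlip (x₀ := y)]
    have h3 := (le_abs_self _).trans
      ((fderiv ℝ h x - fderiv ℝ h y).le_opNorm (pairGrad χ z))
    have h4 := norm_pairGrad_mul_le hB0 hB z
    have h5 : 1 ≤ ‖z‖ := by nlinarith
    have h6 : ‖pairGrad χ z‖ ≤ 2 * B := by nlinarith [norm_nonneg (pairGrad χ z)]
    have h7 : ‖fderiv ℝ h x - fderiv ℝ h y‖ * ‖pairGrad χ z‖ ≤ 2 * C * (2 * B) := by gcongr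
    linarith

/-- The Laplacian of the pair potential is nonnegative near the origin because `d ≥ 2`, and
`O(1/|z|²)` elsewhere; its product with the nonnegative weight `2h(0) - h(z) - h(-z) = O(|z|)`
is therefore bounded below. -/
lemma pairLap_weight {d : ℕ} (hd : 2 ≤ d) {χ : ℝ → ℝ} {B : ℝ} (hB0 : 0 ≤ B)
    (hB : ∀ s : ℝ, 0 < s → |s * profD1 χ s| ≤ B ∧ |s ^ 2 * profD2 χ s| ≤ B)
    (hχone : ∀ r ∈ Set.Icc (0 : ℝ) 1, χ r = 1)
    {h : EuclideanSpace ℝ (Fin d) → ℝ} {C : NNReal} (hlip : LipschitzWith C h)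
    (hpd : ∀ z, 0 ≤ 2 * h 0 - h z - h (-z)) (z : EuclideanSpace ℝ (Fin d)) :
    -(pairLap d χ (‖z‖ ^ 2) * (2 * h 0 - h z - h (-z))) ≤ 2 * C * ((2 * d + 4) * B) := by
  have hR : 0 ≤ 2 * C * ((2 * d + 4) * B) := by positivity
  rcases eq_or_ne z 0 with rfl | hz
  · simpa [pairLap_zero] using hR
  have hz' : 0 < ‖z‖ := norm_pos_iff.2 hz
  have hs : 0 < ‖z‖ ^ 2 := by positivity
  have hw := hpd z
  rcases lt_or_ge (‖z‖ ^ 2) 1 with h1 | h1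
  · obtain ⟨e1, e2⟩ := prof_of_lt_one hχone hs h1
    have hd' : (2 : ℝ) ≤ d := by exact_mod_cast hd
    have hL : pairLap d χ (‖z‖ ^ 2) = (2 * d - 4) / ‖z‖ ^ 2 := by
      rw [pairLap, e1, e2]; field_simp; ring
    have : 0 ≤ pairLap d χ (‖z‖ ^ 2) := by
      rw [hL]; exact div_nonneg (by linarith) hs.le
    nlinarith [mul_nonneg this hw]
  · have h5 : 1 ≤ ‖z‖ := by nlinarith
    have hw2 : 2 * h 0 - h z - h (-z) ≤ 2 * C * ‖z‖ ^ 2 := by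
      have l1 := hlip.dist_le_mul 0 z
      have l2 := hlip.dist_le_mul 0 (-z)
      simp only [Real.dist_eq, dist_zero_left, norm_neg] at l1 l2
      have l3 := (le_abs_self _).trans l1
      have l4 := (le_abs_self _).trans l2
      have : (C : ℝ) * ‖z‖ ≤ C * ‖z‖ ^ 2 := by
        gcongr; nlinarith
      linarith
    obtain ⟨b1, b2⟩ := hB _ hs
    have hL : ‖z‖ ^ 2 * |pairLap d χ (‖z‖ ^ 2)| ≤ (2 * d + 4) * B := by
      rw [← abs_of_pos hs, ← abs_mul, abs_of_pos hs]
      have e : ‖z‖ ^ 2 * pairLap d χ (‖z‖ ^ 2) = 2 * d * (‖z‖ ^ 2 * profD1 χ (‖z‖ ^ 2))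
          + 4 * ((‖z‖ ^ 2) ^ 2 * profD2 χ (‖z‖ ^ 2)) := by rw [pairLap]; ring
      rw [e]
      refine (abs_add_le _ _).trans ?_
      rw [abs_mul (2 * (d : ℝ)), abs_mul 4, abs_of_nonneg (by positivity : (0 : ℝ) ≤ 2 * d),
        abs_of_pos (by norm_num : (0 : ℝ) < 4)]
      have : 2 * (d : ℝ) * |‖z‖ ^ 2 * profD1 χ (‖z‖ ^ 2)| ≤ 2 * d * B := by gcongr
      linarith
    calc -(pairLap d χ (‖z‖ ^ 2) * (2 * h 0 - h z - h (-z)))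
        ≤ |pairLap d χ (‖z‖ ^ 2)| * (2 * h 0 - h z - h (-z)) := by
          rw [← neg_mul]; gcongr; exact neg_le_abs _
      _ ≤ |pairLap d χ (‖z‖ ^ 2)| * (2 * C * ‖z‖ ^ 2) := by gcongr
      _ = 2 * C * (‖z‖ ^ 2 * |pairLap d χ (‖z‖ ^ 2)|) := by ring
      _ ≤ _ := by gcongr

/-! ### The three terms of the generator -/

/-- The drift term: exchanging `j` and `m` turns the kernel into a difference
`h(x_i - x_j) - h(x_i - x_m)`, whose Lipschitz bound compensates `|u(z)| ≲ 1/|z|`. -/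
lemma drift_bound {d N : ℕ} {χ : ℝ → ℝ} {B : ℝ} (hB0 : 0 ≤ B)
    (hB : ∀ s : ℝ, 0 < s → |s * profD1 χ s| ≤ B)
    {h : EuclideanSpace ℝ (Fin d) → ℝ} {C : NNReal} (hlip : LipschitzWith C h)
    (T : EuclideanSpace ℝ (Fin d) →L[ℝ] ℝ) (y : EuclideanSpace ℝ (Fin d))
    (xb : Fin N → EuclideanSpace ℝ (Fin d)) :
    ∑ j, ∑ m, h (y - xb j) * T (pairGrad χ (xb j - xb m))
      ≤ (N : ℝ) ^ 2 * C * B * Real.sqrt (∑ a, T (EuclideanSpace.single a 1) ^ 2) := by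
  rw [sum_symmetrize]
  set S := Real.sqrt (∑ a, T (EuclideanSpace.single a 1) ^ 2) with hS
  have hS0 : 0 ≤ S := Real.sqrt_nonneg _
  have key : ∀ j m, h (y - xb j) * T (pairGrad χ (xb j - xb m))
      + h (y - xb m) * T (pairGrad χ (xb m - xb j)) ≤ C * (2 * B) * S := by
    intro j m
    have e : T (pairGrad χ (xb m - xb j)) = -T (pairGrad χ (xb j - xb m)) := by
      rw [← neg_sub (xb j), pairGrad_neg, map_neg]
    have l1 := hlip.dist_le_mul (y - xb j) (y - xb m)
    rw [Real.dist_eq, dist_eq_norm, sub_sub_sub_cancel_left, norm_sub_rev] at l1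
    have l2 := abs_apply_le_sqrt T (pairGrad χ (xb j - xb m))
    have l3 := norm_pairGrad_mul_le hB0 hB (xb j - xb m)
    calc _ = (h (y - xb j) - h (y - xb m)) * T (pairGrad χ (xb j - xb m)) := by rw [e]; ring
      _ ≤ |h (y - xb j) - h (y - xb m)| * |T (pairGrad χ (xb j - xb m))| := by
          rw [← abs_mul]; exact le_abs_self _
      _ ≤ (C * ‖xb j - xb m‖) * (S * ‖pairGrad χ (xb j - xb m)‖) := by gcongr
      _ = C * (‖xb j - xb m‖ * ‖pairGrad χ (xb j - xb m)‖) * S := by ring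
      _ ≤ _ := by gcongr
  have := Finset.sum_le_sum fun j (_ : j ∈ Finset.univ) =>
    Finset.sum_le_sum fun m (_ : m ∈ Finset.univ) => key j m
  simp only [Finset.sum_const, Finset.card_univ, Fintype.card_fin, nsmul_eq_mul] at this
  linarith

/-- The divergence term: after exchanging `i` and `m`, the pairs with `j ∉ {i, m}` are controlled
one at a time by the one-sided Lipschitz condition, while `j = i` and `j = m` have to be added up
before it applies, with the points `x_i - x_m` and `x_m - x_i`. -/
lemma divergence_bound {d N : ℕ} {χ : ℝ → ℝ} {B : ℝ} (hB0 : 0 ≤ B)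
    (hB : ∀ s : ℝ, 0 < s → |s * profD1 χ s| ≤ B)
    (hχone : ∀ r ∈ Set.Icc (0 : ℝ) 1, χ r = 1)
    {h : EuclideanSpace ℝ (Fin d) → ℝ} {C : NNReal} (hlip : LipschitzWith C h) {C0 : ℝ}
    (hC0 : 0 ≤ C0)
    (hosl : ∀ x y : EuclideanSpace ℝ (Fin d), x ≠ 0 → y ≠ 0 →
      fderiv ℝ h x (x - y) - fderiv ℝ h y (x - y) ≤ C0 * ‖x - y‖ ^ 2)
    {xb : Fin N → EuclideanSpace ℝ (Fin d)} (hx : ∀ l m : Fin N, l ≠ m → xb l ≠ xb m) :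
    ∑ i, ∑ m, ∑ j, (if i = j then 0 else fderiv ℝ h (xb i - xb j)) (pairGrad χ (xb i - xb m))
      ≤ 1 / 2 * ((N : ℝ) ^ 2 * ((N + 1) * (4 * C0 + 4 * C * B))) := by
  rw [sum_symmetrize]
  set K := 4 * C0 + 4 * C * B with hK
  have hK0 : 0 ≤ K := by positivity
  have key : ∀ i m,
      (∑ j, (if i = j then 0 else fderiv ℝ h (xb i - xb j)) (pairGrad χ (xb i - xb m)))
      + ∑ j, (if m = j then 0 else fderiv ℝ h (xb m - xb j)) (pairGrad χ (xb m - xb i))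
      ≤ (N + 1) * K := by
    intro i m
    rcases eq_or_ne i m with rfl | him
    · simp only [sub_self, pairGrad_zero, map_zero, Finset.sum_const_zero, add_zero]
      positivity
    set w := pairGrad χ (xb i - xb m) with hw
    have e : pairGrad χ (xb m - xb i) = -w := by rw [← neg_sub (xb i), pairGrad_neg]
    have e0 : xb i - xb m ≠ 0 := sub_ne_zero.2 (hx _ _ him)
    have e1 : xb m - xb i ≠ 0 := sub_ne_zero.2 (hx _ _ him.symm)
    have hj : ∀ j, (if i = j then 0 else fderiv ℝ h (xb i - xb j)) w
        + (if m = j then 0 else fderiv ℝ h (xb m - xb j)) (-w)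
        ≤ K + (if i = j then -(fderiv ℝ h (xb m - xb i) w) else 0)
          + (if m = j then fderiv ℝ h (xb i - xb m) w else 0) := by
      intro j
      by_cases h1 : i = j
      · subst h1
        simp [him.symm, hK0]
      by_cases h2 : m = j
      · subst h2
        simp [him, hK0]
      simp only [h1, h2, if_false, map_neg, add_zero]
      have := osl_pairGrad (c := 1) hB0 hB hχone hlip hC0 le_rfl one_le_two
        (hosl _ _ (sub_ne_zero.2 (hx i j h1)) (sub_ne_zero.2 (hx m j h2)))
        (z := xb i - xb m) (by rw [one_smul]; abel)
      rw [_root_.sub_apply] at this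
      linarith
    have hpm := osl_pairGrad (c := 2) hB0 hB hχone hlip hC0 one_le_two le_rfl
        (hosl _ _ e0 e1) (z := xb i - xb m) (by rw [two_smul]; abel)
    rw [_root_.sub_apply] at hpm
    have hsum := Finset.sum_le_sum fun j (_ : j ∈ Finset.univ) => hj j
    simp only [Finset.sum_add_distrib, Finset.sum_ite_eq, Finset.mem_univ, if_true,
      Finset.sum_const, Finset.card_univ, Fintype.card_fin, nsmul_eq_mul] at hsum
    rw [e]
    linarith
  have := Finset.sum_le_sum fun j (_ : j ∈ Finset.univ) =>
    Finset.sum_le_sum fun m (_ : m ∈ Finset.univ) => key j m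
  simp only [Finset.sum_const, Finset.card_univ, Fintype.card_fin, nsmul_eq_mul] at this
  linarith

/-- The diffusion term, as a sum over pairs weighted by `h(0) - h(x_m - x_j)`. -/
lemma diffusion_bound {d N : ℕ} (hd : 2 ≤ d) {χ : ℝ → ℝ} {B : ℝ} (hB0 : 0 ≤ B)
    (hB : ∀ s : ℝ, 0 < s → |s * profD1 χ s| ≤ B ∧ |s ^ 2 * profD2 χ s| ≤ B)
    (hχone : ∀ r ∈ Set.Icc (0 : ℝ) 1, χ r = 1)
    {h : EuclideanSpace ℝ (Fin d) → ℝ} {C : NNReal} (hlip : LipschitzWith C h)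
    (hpd : ∀ z, 0 ≤ 2 * h 0 - h z - h (-z)) (xb : Fin N → EuclideanSpace ℝ (Fin d)) :
    ∑ j, ∑ m, -(pairLap d χ (‖xb j - xb m‖ ^ 2) * (h 0 - h (xb m - xb j)))
      ≤ 1 / 2 * ((N : ℝ) ^ 2 * (2 * C * ((2 * d + 4) * B))) := by
  rw [sum_symmetrize]
  have key : ∀ j m, -(pairLap d χ (‖xb j - xb m‖ ^ 2) * (h 0 - h (xb m - xb j)))
      + -(pairLap d χ (‖xb m - xb j‖ ^ 2) * (h 0 - h (xb j - xb m)))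
      ≤ 2 * C * ((2 * d + 4) * B) := by
    intro j m
    have := pairLap_weight hd hB0 hB hχone hlip hpd (xb j - xb m)
    rw [neg_sub] at this
    rw [norm_sub_rev (xb m)]
    linarith
  have := Finset.sum_le_sum fun j (_ : j ∈ Finset.univ) =>
    Finset.sum_le_sum fun m (_ : m ∈ Finset.univ) => key j m
  simp only [Finset.sum_const, Finset.card_univ, Fintype.card_fin, nsmul_eq_mul] at this
  linarith

/-- The generator applied to the Lyapunov function, with all derivatives carried out. -/
lemma svgdGen_lyapF {d N : ℕ} {χ : ℝ → ℝ} (hχ : ContDiff ℝ (⊤ : ℕ∞) χ)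
    {h : EuclideanSpace ℝ (Fin d) → ℝ} (hd : ∀ z, z ≠ 0 → DifferentiableAt ℝ h z)
    (V : EuclideanSpace ℝ (Fin d) → ℝ)
    {xb : Fin N → EuclideanSpace ℝ (Fin d)} (hx : ∀ l m : Fin N, l ≠ m → xb l ≠ xb m) :
    svgdGen h V (lyapF χ) xb = (1 / (N : ℝ)) *
      ((∑ i, ∑ j, ∑ m, h (xb i - xb j) * fderiv ℝ V (xb i) (pairGrad χ (xb j - xb m)))
      + (∑ i, ∑ m, ∑ j,
          (if i = j then 0 else fderiv ℝ h (xb i - xb j)) (pairGrad χ (xb i - xb m)))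
      + ∑ j, ∑ m, -(pairLap d χ (‖xb j - xb m‖ ^ 2) * (h 0 - h (xb m - xb j)))) := by
  rw [svgdGen, mul_add, mul_add]
  congr 1
  · congr 1
    · rw [Finset.mul_sum, ← Finset.sum_neg_distrib]
      refine Finset.sum_congr rfl fun i _ => ?_
      rw [Finset.mul_sum, ← Finset.sum_neg_distrib]
      refine Finset.sum_congr rfl fun j _ => ?_
      simp only [pdc_lyapF hχ hx]
      have e : ∀ m, fderiv ℝ V (xb i) (pairGrad χ (xb j - xb m))
          = ∑ a, fderiv ℝ V (xb i) (EuclideanSpace.single a 1) * pairGrad χ (xb j - xb m) a :=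
        fun m => (sum_apply_single _ _).symm
      simp only [e, Finset.mul_sum, mul_neg, Finset.sum_neg_distrib, neg_neg]
      rw [Finset.sum_comm]
      refine Finset.sum_congr rfl fun m _ => Finset.sum_congr rfl fun a _ => ?_
      ring
    · rw [Finset.mul_sum]
      refine Finset.sum_congr rfl fun i _ => ?_
      simp only [pdc_lyapF hχ hx, pdc_kernel hd hx]
      have e : ∀ m j, (if i = j then 0 else fderiv ℝ h (xb i - xb j)) (pairGrad χ (xb i - xb m))
          = ∑ a, (if i = j then 0 else fderiv ℝ h (xb i - xb j)) (EuclideanSpace.single a 1)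
              * pairGrad χ (xb i - xb m) a :=
        fun m j => (sum_apply_single _ _).symm
      simp only [e, Finset.mul_sum, Finset.sum_mul, mul_neg, neg_mul, Finset.sum_neg_distrib,
        neg_neg]
      rw [Finset.sum_comm]
      refine Finset.sum_congr rfl fun j _ => ?_
      rw [Finset.sum_comm]
      refine Finset.sum_congr rfl fun m _ => Finset.sum_congr rfl fun a _ => ?_
      ring
  · have e : ∀ i j, ∑ a, (1 / (N : ℝ)) * h (xb i - xb j)
        * pdc i a (fun x => pdc j a (lyapF χ) x) xb
        = (1 / (N : ℝ)) * ∑ m, -(h (xb i - xb j)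
          * (((if j = i then 1 else 0) - (if m = i then 1 else 0))
            * pairLap d χ (‖xb j - xb m‖ ^ 2))) := by
      intro i j
      rw [← Finset.mul_sum, sum_pdc_pdc_lyapF hχ hx, mul_assoc, Finset.sum_neg_distrib, mul_neg,
        Finset.mul_sum]
    simp only [e, ← Finset.mul_sum]
    congr 1
    rw [Finset.sum_comm]
    refine Finset.sum_congr rfl fun j _ => ?_
    rw [Finset.sum_comm]
    refine Finset.sum_congr rfl fun m _ => ?_
    simp only [sub_mul, mul_sub, ite_mul, mul_ite, one_mul, zero_mul, mul_zero,
      Finset.sum_neg_distrib, Finset.sum_sub_distrib, Finset.sum_ite_eq, Finset.mem_univ,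
      if_true, sub_self]
    ring

/-- Lyapunov estimate for stochastic SVGD. On the set of
configurations with pairwise distinct particles,
`L̄F(x̄) ≤ C₁ Σ_i |∇V(x_i)| + C₂`. -/
theorem stmt_18 {d : ℕ} (hd : 2 ≤ d) (N : ℕ)
    (V : EuclideanSpace ℝ (Fin d) → ℝ) (hV : ContDiff ℝ 1 V)
    -- `h ∈ C(ℝ^d) ∩ C¹(ℝ^d∖{0})`, Lipschitz and positive definite
    (h : EuclideanSpace ℝ (Fin d) → ℝ)
    (hc : Continuous h)
    (hc1 : ContDiffOn ℝ 1 h {(0 : EuclideanSpace ℝ (Fin d))}ᶜ)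
    (hlip : ∃ C : NNReal, LipschitzWith C h)
    (hpdf : ∀ (n : ℕ) (α : Fin n → ℝ) (x : Fin n → EuclideanSpace ℝ (Fin d)),
      0 ≤ ∑ i, ∑ j, α i * α j * h (x i - x j))
    -- one-sided Lipschitz condition for `∇h` away from the origin
    (hosl : ∃ C : ℝ, ∀ x y : EuclideanSpace ℝ (Fin d), x ≠ 0 → y ≠ 0 →
      fderiv ℝ h x (x - y) - fderiv ℝ h y (x - y) ≤ C * ‖x - y‖ ^ 2)
    -- the cutoff function `χ`
    (χ : ℝ → ℝ) (hχ : ContDiff ℝ (⊤ : ℕ∞) χ) (hχc : HasCompactSupport χ)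
    (hχpos : ∀ r, 0 ≤ χ r) (hχone : ∀ r ∈ Set.Icc (0 : ℝ) 1, χ r = 1) :
    ∃ C₁ C₂ : ℝ, ∀ xb : Fin N → EuclideanSpace ℝ (Fin d),
      (∀ l m : Fin N, l ≠ m → xb l ≠ xb m) →
      svgdGen h V (lyapF χ) xb
        ≤ C₁ * (∑ i, Real.sqrt (∑ a, fderiv ℝ V (xb i) (EuclideanSpace.single a 1) ^ 2))
          + C₂ := by
  obtain ⟨C, hlip⟩ := hlip
  obtain ⟨C0, hosl⟩ := hosl
  obtain ⟨B, hB0, hB⟩ := prof_bounds hχ hχc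
  have hdiff : ∀ z : EuclideanSpace ℝ (Fin d), z ≠ 0 → DifferentiableAt ℝ h z := fun z hz =>
    (hc1.differentiableOn one_ne_zero).differentiableAt (isOpen_compl_singleton.mem_nhds hz)
  -- Positive definiteness enters only through the weights `α = (1, -1)` at the points `z, 0`.
  have hpd : ∀ z, 0 ≤ 2 * h 0 - h z - h (-z) := fun z => by
    have := hpdf 2 ![1, -1] ![z, 0]
    simp [Fin.sum_univ_two] at this
    linarith
  have hosl' : ∀ x y : EuclideanSpace ℝ (Fin d), x ≠ 0 → y ≠ 0 →
      fderiv ℝ h x (x - y) - fderiv ℝ h y (x - y) ≤ max C0 0 * ‖x - y‖ ^ 2 :=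
    fun x y hx hy => (hosl x y hx hy).trans (by gcongr; exact le_max_left _ _)
  refine ⟨(1 / (N : ℝ)) * ((N : ℝ) ^ 2 * C * B),
    (1 / (N : ℝ)) * (1 / 2 * ((N : ℝ) ^ 2 * ((N + 1) * (4 * max C0 0 + 4 * C * B)))
      + 1 / 2 * ((N : ℝ) ^ 2 * (2 * C * ((2 * d + 4) * B)))), fun xb hx => ?_⟩
  rw [svgdGen_lyapF hχ hdiff V hx, mul_assoc, ← mul_add]
  refine mul_le_mul_of_nonneg_left ?_ (by positivity)
  have t1 := Finset.sum_le_sum fun i (_ : i ∈ Finset.univ) =>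
    drift_bound hB0 (fun s hs => (hB s hs).1) hlip (fderiv ℝ V (xb i)) (xb i) xb
  rw [← Finset.mul_sum] at t1
  have t2 := divergence_bound hB0 (fun s hs => (hB s hs).1) hχone hlip (le_max_right C0 0)
    hosl' hx
  have t3 := diffusion_bound hd hB0 hB hχone hlip hpd xb
  linarith
end
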